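/- There exists a universal constant C > 0 such that the following holds. Let n ≥ 1, let K, T ⊆ ℝⁿ be convex bodies containing the origin in their interior, and let U be a random orthogonal matrix distributed according to the Haar probability measure on O(n). Then E‖U: K → T‖ ≤ C·(R(K)·M(T) + R(T°)·M(K°)). -/

import Mathlib

/-!
By duality, `‖A : K → T‖` is the supremum of `⟨A x, y⟩` over `x ∈ K` and `y ∈ T°`. It is therefore
a nonnegative sublinear function `F` of the matrix `A`, the support function of a set of rank-one
matrices. The proof bounds `F` on a Gaussian matrix `G`, and then compares `G` with the random
orthogonal matrix `U`.

**Gaussian matrices.** Chevet's inequality (`chevet`) states that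
`E F(G) ≤ √2 (R(K) E ‖g‖_T + R(T°) E ‖g‖_{K°})` with `g` a standard Gaussian vector. It is an instance
of the Sudakov–Fernique inequality (`sudakov_fernique`): the increments of the process `⟨G x, y⟩` are
dominated by those of `√2 (R(K) ⟨y, g₁⟩ + R(T°) ⟨x, g₂⟩)`. Sudakov–Fernique itself is obtained by
rotating one family of points into the other: by Gaussian integration by parts, the mean of the
log-sum-exp function is monotone along the rotation (`gibbs_ibp`, `lse_comparison`), and scaling
recovers the maximum. In polar coordinates, and because `E |g| ≤ √n`, one has
`E ‖g‖_T ≤ √n M(T)`, and likewise for `K°` (`integral_gauge_le`).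

**From Gaussian to orthogonal matrices.** Let `H(A)` be the mean of `F(Uᵀ A V)` for independent copies
`U`, `V` of the random orthogonal matrix. Then `H` is sublinear and invariant under orthogonal matrices
on both sides, `H(1) = E F(U)`, and `E H(G) = E F(G)`. By the singular value decomposition, `H(A)` only
depends on the singular values `sᵢ` of `A`, and averaging over their cyclic shifts gives
`n H(A) ≥ (∑ sᵢ) H(1)`. Moreover `s ≥ r s² - (4/27) r³ s⁴` for `r, s ≥ 0`. With `r = 1/√n` the right-hand
side sums to a combination of `tr (AᵀA)` and `tr ((AᵀA)²)`, and for `A = G` these traces have means `n²`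
and `2n³ + n²` by Wick's formula. This gives `E F(G) ≥ (5/9) √n E F(U)` (`orthogonal_le_gaussian`). The
factors `√n` cancel, and the constant is `C = (9/5) √2`.
-/

open MeasureTheory Real Pointwise RealInnerProductSpace
open scoped ENNReal

noncomputable section

/-- A convex body: a compact convex set with non-empty interior. -/
def IsConvexBody {n : ℕ} (K : Set (EuclideanSpace ℝ (Fin n))) : Prop :=
  IsCompact K ∧ Convex ℝ K ∧ (interior K).Nonempty

/-- The uniform probability measure on a set `K`. -/
def unifOn {n : ℕ} (K : Set (EuclideanSpace ℝ (Fin n))) : Measure (EuclideanSpace ℝ (Fin n)) :=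
  (volume K)⁻¹ • volume.restrict K

/-- A probability measure `μ` on `ℝⁿ` is isotropic: its barycenter vanishes and its
covariance matrix is the identity. -/
def IsIsotropicMeasure {n : ℕ} (μ : Measure (EuclideanSpace ℝ (Fin n))) : Prop :=
  (∀ i, ∫ x, x i ∂μ = 0) ∧ ∀ i j, ∫ x, x i * x j ∂μ = if i = j then 1 else 0

/-- A convex body is in isotropic position if the uniform probability measure on it
is isotropic. -/
def IsIsotropicBody {n : ℕ} (K : Set (EuclideanSpace ℝ (Fin n))) : Prop :=
  IsIsotropicMeasure (unifOn K)

/-- A log-concave density: nonnegative, and multiplicatively convex. This is equivalent to: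
`{p > 0}` is convex and `log (1/p)` is convex on it. -/
def IsLogConcaveDensity {n : ℕ} (p : EuclideanSpace ℝ (Fin n) → ℝ) : Prop :=
  (∀ x, 0 ≤ p x) ∧ ∀ x y : EuclideanSpace ℝ (Fin n), ∀ t : ℝ, 0 ≤ t → t ≤ 1 →
    p x ^ t * p y ^ (1 - t) ≤ p (t • x + (1 - t) • y)

/-- A measure on `ℝⁿ` is log-concave if it has a log-concave density w.r.t. Lebesgue. -/
def IsLogConcaveMeasure {n : ℕ} (μ : Measure (EuclideanSpace ℝ (Fin n))) : Prop :=
  ∃ p : EuclideanSpace ℝ (Fin n) → ℝ, Measurable p ∧ IsLogConcaveDensity p ∧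
    μ = volume.withDensity fun x => ENNReal.ofReal (p x)

/-- The standard Gaussian probability measure on `ℝⁿ`. -/
def stdGaussian (n : ℕ) : Measure (EuclideanSpace ℝ (Fin n)) :=
  volume.withDensity fun x => ENNReal.ofReal ((2 * π) ^ (-(n : ℝ) / 2) * Real.exp (-‖x‖ ^ 2 / 2))

/-- The Poincaré constant of a measure: the least `A ≥ 0` such that
`Var f ≤ A ⬝ E |∇ f|²` for all locally Lipschitz `f`. -/
def poincareConst {n : ℕ} (μ : Measure (EuclideanSpace ℝ (Fin n))) : ℝ :=
  sInf {A : ℝ | 0 ≤ A ∧ ∀ f : EuclideanSpace ℝ (Fin n) → ℝ, LocallyLipschitz f →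
    ∫ x, (f x - ∫ y, f y ∂μ) ^ 2 ∂μ ≤ A * ∫ x, ‖gradient f x‖ ^ 2 ∂μ}

/-- The KLS constant `ψₙ`. -/
def KLSConst (n : ℕ) : ℝ :=
  sSup {s : ℝ | ∃ μ : Measure (EuclideanSpace ℝ (Fin n)), IsProbabilityMeasure μ ∧
    IsLogConcaveMeasure μ ∧ IsIsotropicMeasure μ ∧ s = Real.sqrt (poincareConst μ)}

/-- The Hilbert-Schmidt norm of a matrix. -/
def hsNorm {n : ℕ} (M : Matrix (Fin n) (Fin n) ℝ) : ℝ :=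
  Real.sqrt (∑ i, ∑ j, (M i j) ^ 2)

/-- The coefficient `κₙ`, the supremum of `‖E [X₁ (X ⊗ X)]‖_HS` over all isotropic
log-concave random vectors `X` in `ℝⁿ`. -/
def kappaConst (n : ℕ) : ℝ :=
  sSup {s : ℝ | ∃ μ : Measure (EuclideanSpace ℝ (Fin n)), IsProbabilityMeasure μ ∧
    IsLogConcaveMeasure μ ∧ IsIsotropicMeasure μ ∧ ∃ h : 0 < n,
    s = hsNorm (Matrix.of fun i j => ∫ x, x ⟨0, h⟩ * (x i * x j) ∂μ)}

/-- A gauge function on `ℝⁿ`: non-negative, convex, positively homogeneous. -/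
def IsGauge {n : ℕ} (f : EuclideanSpace ℝ (Fin n) → ℝ) : Prop :=
  (∀ x, 0 ≤ f x) ∧ ConvexOn ℝ Set.univ f ∧
    ∀ (c : ℝ), 0 ≤ c → ∀ x, f (c • x) = c * f x

/-- `M(K)`: the mean of the Minkowski functional of `K` over the unit sphere, w.r.t. the
uniform probability measure on the sphere. -/
def Mparam (n : ℕ) (K : Set (EuclideanSpace ℝ (Fin n))) : ℝ :=
  ∫ x : Metric.sphere (0 : EuclideanSpace ℝ (Fin n)) 1,
    gauge K x ∂(((volume : Measure (EuclideanSpace ℝ (Fin n))).toSphere Set.univ)⁻¹ •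
      (volume : Measure (EuclideanSpace ℝ (Fin n))).toSphere)

/-- The polar body. -/
def polarBody {n : ℕ} (K : Set (EuclideanSpace ℝ (Fin n))) : Set (EuclideanSpace ℝ (Fin n)) :=
  {x | ∀ y ∈ K, ⟪x, y⟫ ≤ 1}

/-- `R(K)`: the maximal Euclidean norm of a point of `K`. -/
def Rparam {n : ℕ} (K : Set (EuclideanSpace ℝ (Fin n))) : ℝ :=
  sSup {r : ℝ | ∃ x ∈ K, r = ‖x‖}

/-- The operator norm `‖A : K → T‖ = sup_{x ≠ 0} ‖Ax‖_T / ‖x‖_K` (Minkowski functionals). -/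
def mapNorm {n : ℕ} (K T : Set (EuclideanSpace ℝ (Fin n)))
    (A : Matrix (Fin n) (Fin n) ℝ) : ℝ :=
  sSup {r : ℝ | ∃ x : EuclideanSpace ℝ (Fin n), x ≠ 0 ∧
    r = gauge T (Matrix.toEuclideanLin A x) / gauge K x}

/-- The ℓ₂ operator norm of a matrix. -/
def matOpNorm {n : ℕ} (M : Matrix (Fin n) (Fin n) ℝ) : ℝ :=
  ‖LinearMap.toContinuousLinearMap (Matrix.toEuclideanLin M)‖

set_option linter.unusedSectionVars false

/-! ### The Gaussian measure and integration by parts -/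

section Gaussian

variable {E : Type*} [NormedAddCommGroup E] [InnerProductSpace ℝ E] [FiniteDimensional ℝ E]
  [MeasurableSpace E] [BorelSpace E]
variable {F : Type*} [NormedAddCommGroup F] [InnerProductSpace ℝ F] [FiniteDimensional ℝ F]
  [MeasurableSpace F] [BorelSpace F]

variable (E) in
/-- The standard Gaussian probability measure on a Euclidean space. -/
abbrev stdG : Measure E := ProbabilityTheory.stdGaussian E

/-- A linear map whose adjoint is isometric sends the standard Gaussian to the standard
Gaussian; this covers orthogonal transformations and orthogonal projections. -/
lemma stdG_map (L : E →L[ℝ] F) (L' : F → E) (hL : ∀ x t, ⟪L x, t⟫ = ⟪x, L' t⟫)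
    (hn : ∀ t, ‖L' t‖ = ‖t‖) : (stdG E).map L = stdG F := by
  have : IsProbabilityMeasure ((stdG E).map L) :=
    Measure.isProbabilityMeasure_map L.continuous.measurable.aemeasurable
  apply Measure.ext_of_charFun
  ext t
  have h1 : charFun ((stdG E).map L) t = charFun (stdG E) (L' t) := by
    rw [charFun_apply, charFun_apply, integral_map (by fun_prop) (by fun_prop)]
    simp_rw [hL]
  rw [h1, ProbabilityTheory.charFun_stdGaussian, ProbabilityTheory.charFun_stdGaussian, hn]

variable (E) in
/-- The (positive) normalizing constant of the Gaussian density. -/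
def gaussConst : ℝ := ((2 * π) ^ (Module.finrank ℝ E / 2 : ℝ))⁻¹

lemma gaussConst_pos : 0 < gaussConst E := by unfold gaussConst; positivity

lemma integrable_gauss : Integrable (fun x : E => gaussConst E * rexp (-‖x‖ ^ 2 / 2)) := by
  apply Integrable.const_mul
  have := (GaussianFourier.integrable_cexp_neg_mul_sq_norm_add (V := E) (b := 1/2)
    (by norm_num) 0 0).norm
  refine this.congr (Filter.Eventually.of_forall fun x => ?_)
  simp only [Complex.norm_exp]
  congr 1
  simp [← Complex.ofReal_pow]
  ring

lemma stdG_eq : stdG E = volume.withDensity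
    (fun x => ENNReal.ofReal (gaussConst E * rexp (-‖x‖ ^ 2 / 2))) := by
  have hfin : IsFiniteMeasure (volume.withDensity
    (fun x : E => ENNReal.ofReal (gaussConst E * rexp (-‖x‖ ^ 2 / 2)))) :=
    isFiniteMeasure_withDensity_ofReal integrable_gauss.2
  apply Measure.ext_of_charFun
  ext t
  rw [ProbabilityTheory.charFun_stdGaussian, charFun_apply,
    integral_withDensity_eq_integral_toReal_smul (by fun_prop)
      (Filter.Eventually.of_forall fun _ => ENNReal.ofReal_lt_top)]
  have h := GaussianFourier.integral_cexp_neg_mul_sq_norm_add (V := E) (b := 1/2)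
    (by norm_num) Complex.I t
  have h2 : ∀ x : E, (ENNReal.ofReal (gaussConst E * rexp (-‖x‖ ^ 2 / 2))).toReal •
      Complex.exp (⟪x, t⟫ * Complex.I) = (gaussConst E : ℂ) *
        Complex.exp (-(1/2) * ‖x‖ ^ 2 + Complex.I * ⟪t, x⟫) := by
    intro x
    rw [ENNReal.toReal_ofReal (by have := gaussConst_pos (E := E); positivity), Complex.exp_add,
      Complex.real_smul]
    push_cast
    rw [real_inner_comm, mul_comm Complex.I, mul_assoc]
    congr 3
    ring_nf
  simp_rw [h2]
  rw [integral_const_mul, h, gaussConst]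
  have h3 : ((π : ℂ) / (1/2)) ^ (Module.finrank ℝ E / 2 : ℂ) =
      (((2 * π) ^ (Module.finrank ℝ E / 2 : ℝ) : ℝ) : ℂ) := by
    rw [Complex.ofReal_cpow (by positivity)]
    push_cast
    congr 1
    ring
  rw [h3, ← mul_assoc, ← Complex.ofReal_mul, inv_mul_cancel₀ (by positivity)]
  simp
  congr 1
  ring

lemma integral_stdG (f : E → ℝ) :
    ∫ x, f x ∂(stdG E) = ∫ x, gaussConst E * rexp (-‖x‖ ^ 2 / 2) * f x := by
  rw [stdG_eq, integral_withDensity_eq_integral_toReal_smul (by fun_prop)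
      (Filter.Eventually.of_forall fun _ => ENNReal.ofReal_lt_top)]
  congr 1
  ext x
  rw [ENNReal.toReal_ofReal (by have := gaussConst_pos (E := E); positivity), smul_eq_mul]

lemma integrable_stdG_iff (f : E → ℝ) :
    Integrable f (stdG E) ↔ Integrable (fun x => gaussConst E * rexp (-‖x‖ ^ 2 / 2) * f x) := by
  rw [stdG_eq, integrable_withDensity_iff_integrable_smul' (by fun_prop)
      (Filter.Eventually.of_forall fun _ => ENNReal.ofReal_lt_top)]
  refine integrable_congr (Filter.Eventually.of_forall fun x => ?_)
  simp only [smul_eq_mul]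
  rw [ENNReal.toReal_ofReal (by have := gaussConst_pos (E := E); positivity)]

/-- Gaussian integration by parts. -/
lemma gauss_ibp (f : E → ℝ) (f' : E → E →L[ℝ] ℝ) (hf : ∀ x, HasFDerivAt f (f' x) x) (v : E)
    (h1 : Integrable f (stdG E)) (h2 : Integrable (fun x => f' x v) (stdG E))
    (h3 : Integrable (fun x => f x * ⟪v, x⟫) (stdG E)) :
    ∫ x, f x * ⟪v, x⟫ ∂(stdG E) = ∫ x, f' x v ∂(stdG E) := by
  rw [integrable_stdG_iff] at h1 h2 h3
  rw [integral_stdG, integral_stdG]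
  have hd : ∀ x : E, HasFDerivAt (fun x : E => gaussConst E * rexp (-‖x‖ ^ 2 / 2))
      (-(gaussConst E * rexp (-‖x‖ ^ 2 / 2)) • innerSL ℝ x) x := by
    intro x
    have h := (((hasStrictFDerivAt_norm_sq x).hasFDerivAt.neg.mul_const (1/2 : ℝ)).exp).const_mul
      (gaussConst E)
    have e : (fun x : E => gaussConst E * rexp (-‖x‖ ^ 2 / 2)) =
        fun x : E => gaussConst E * rexp ((-‖x‖ ^ 2) * (1/2)) := by
      ext x; congr 2; ring
    rw [e]
    refine h.congr_fderiv ?_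
    ext y
    simp
    ring_nf
  have key := integral_bilinear_hasFDerivAt_right_eq_neg_left_of_integrable
    (μ := (volume : Measure E)) (B := ContinuousLinearMap.mul ℝ ℝ)
    (f := fun x : E => gaussConst E * rexp (-‖x‖ ^ 2 / 2))
    (f' := fun x => -(gaussConst E * rexp (-‖x‖ ^ 2 / 2)) • innerSL ℝ x)
    (g := f) (g' := f') (v := v) ?_ ?_ ?_ (fun x _ => hd x) (fun x _ => hf x)
  · simp only [ContinuousLinearMap.mul_apply'] at key
    rw [key, ← integral_neg]
    congr 1
    ext x
    simp [real_inner_comm]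
    ring
  · refine h3.neg.congr (Filter.Eventually.of_forall fun x => ?_)
    simp [real_inner_comm]
    ring
  · simpa using h2
  · simpa using h1

end Gaussian

/-! ### The Sudakov–Fernique inequality -/

section SudakovFernique

variable {E : Type*} [NormedAddCommGroup E] [InnerProductSpace ℝ E] [FiniteDimensional ℝ E]
  [MeasurableSpace E] [BorelSpace E]
variable {F : Type*} [NormedAddCommGroup F] [InnerProductSpace ℝ F] [FiniteDimensional ℝ F]
  [MeasurableSpace F] [BorelSpace F]

lemma integrable_norm_pow_stdG (k : ℕ) : Integrable (fun x : E => ‖x‖ ^ k) (stdG E) := by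
  have h := ProbabilityTheory.IsGaussian.memLp_id (stdG E) k (by simp)
  simpa using h.integrable_norm_pow'

lemma integrable_stdG_of_le {f : E → ℝ} (hf : AEStronglyMeasurable f (stdG E)) (A B : ℝ) (k : ℕ)
    (h : ∀ x, |f x| ≤ A + B * ‖x‖ ^ k) : Integrable f (stdG E) := by
  refine Integrable.mono' ((integrable_const A).add ((integrable_norm_pow_stdG k).const_mul B)) hf
    (Filter.Eventually.of_forall fun x => ?_)
  simpa using h x

variable {ι : Type*} [Fintype ι] [Nonempty ι]

/-- The log-sum-exp function of the linear functionals `⟪c i, ·⟫`, a smooth substitute for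
their maximum. -/
def lse (c : ι → E) (x : E) : ℝ := Real.log (∑ i, rexp ⟪c i, x⟫)

/-- The Gibbs weights, i.e. the partial derivatives of log-sum-exp. -/
def gibbs (c : ι → E) (i : ι) (x : E) : ℝ := rexp (⟪c i, x⟫ - lse c x)

lemma sum_exp_pos (c : ι → E) (x : E) : 0 < ∑ i, rexp ⟪c i, x⟫ :=
  Finset.sum_pos (fun _ _ => Real.exp_pos _) Finset.univ_nonempty

lemma gibbs_eq (c : ι → E) (i : ι) (x : E) :
    gibbs c i x = rexp ⟪c i, x⟫ / ∑ j, rexp ⟪c j, x⟫ := by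
  rw [gibbs, lse, Real.exp_sub, Real.exp_log (sum_exp_pos c x)]

lemma sum_gibbs (c : ι → E) (x : E) : ∑ i, gibbs c i x = 1 := by
  simp_rw [gibbs_eq, ← Finset.sum_div]
  exact div_self (sum_exp_pos c x).ne'

lemma gibbs_nonneg (c : ι → E) (i : ι) (x : E) : 0 ≤ gibbs c i x := (Real.exp_pos _).le

lemma gibbs_le_one (c : ι → E) (i : ι) (x : E) : gibbs c i x ≤ 1 := by
  rw [← sum_gibbs c x]
  exact Finset.single_le_sum (fun j _ => gibbs_nonneg c j x) (Finset.mem_univ i)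

lemma le_lse (c : ι → E) (i : ι) (x : E) : ⟪c i, x⟫ ≤ lse c x := by
  have := gibbs_le_one c i x
  rw [gibbs, Real.exp_le_one_iff] at this
  linarith

lemma lse_le (c : ι → E) (x : E) (m : ℝ) (hm : ∀ i, ⟪c i, x⟫ ≤ m) :
    lse c x ≤ Real.log (Fintype.card ι) + m := by
  have hc : (0 : ℝ) < Fintype.card ι := by exact_mod_cast Fintype.card_pos
  rw [lse, Real.log_le_iff_le_exp (sum_exp_pos c x), Real.exp_add, Real.exp_log hc]
  calc ∑ i, rexp ⟪c i, x⟫ ≤ ∑ _i : ι, rexp m :=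
        Finset.sum_le_sum fun i _ => Real.exp_le_exp.2 (hm i)
    _ = _ := by simp

lemma hasFDerivAt_lse (c : ι → E) (x : E) :
    HasFDerivAt (lse c) (∑ i, gibbs c i x • innerSL ℝ (c i)) x := by
  have h1 : HasFDerivAt (fun x => ∑ i, rexp ⟪c i, x⟫)
      (∑ i, rexp ⟪c i, x⟫ • innerSL ℝ (c i)) x := by
    refine HasFDerivAt.fun_sum fun i _ => ?_
    exact ((innerSL ℝ (c i)).hasFDerivAt (x := x)).exp
  refine (h1.log (sum_exp_pos c x).ne').congr_fderiv ?_
  simp_rw [gibbs_eq, Finset.smul_sum, smul_smul, div_eq_inv_mul]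

lemma hasFDerivAt_gibbs (c : ι → E) (i : ι) (x : E) :
    HasFDerivAt (gibbs c i)
      (gibbs c i x • (innerSL ℝ (c i) - ∑ j, gibbs c j x • innerSL ℝ (c j))) x := by
  exact (((innerSL ℝ (c i)).hasFDerivAt (x := x)).sub (hasFDerivAt_lse c x)).exp

lemma continuous_lse (c : ι → E) : Continuous (lse c) :=
  continuous_iff_continuousAt.2 fun x => (hasFDerivAt_lse c x).continuousAt

lemma continuous_gibbs (c : ι → E) (i : ι) : Continuous (gibbs c i) :=
  continuous_iff_continuousAt.2 fun x => (hasFDerivAt_gibbs c i x).continuousAt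

lemma abs_lse_le (c : ι → E) (x : E) :
    |lse c x| ≤ Real.log (Fintype.card ι) + (∑ i, ‖c i‖) * ‖x‖ := by
  have hb : ∀ i, |⟪c i, x⟫| ≤ (∑ i, ‖c i‖) * ‖x‖ := fun i =>
    (abs_real_inner_le_norm _ _).trans (by
      gcongr
      exact Finset.single_le_sum (f := fun i => ‖c i‖) (fun j _ => norm_nonneg _)
        (Finset.mem_univ i))
  have hl : 0 ≤ Real.log (Fintype.card ι) := Real.log_natCast_nonneg _
  rw [abs_le]
  constructor
  · obtain ⟨i⟩ := ‹Nonempty ι›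
    have := le_lse c i x
    have := (abs_le.1 (hb i)).1
    linarith
  · exact lse_le c x _ fun i => (abs_le.1 (hb i)).2

lemma integrable_lse (c : ι → E) : Integrable (lse c) (stdG E) :=
  integrable_stdG_of_le (continuous_lse c).aestronglyMeasurable (Real.log (Fintype.card ι))
    (∑ i, ‖c i‖) 1 (fun x => by simpa using abs_lse_le c x)

lemma integrable_gibbs_mul_inner (c : ι → E) (i : ι) (v : E) :
    Integrable (fun x => gibbs c i x * ⟪v, x⟫) (stdG E) := by
  refine integrable_stdG_of_le (((continuous_gibbs c i).mul
    (by fun_prop)).aestronglyMeasurable) 0 ‖v‖ 1 (fun x => ?_)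
  rw [abs_mul, abs_of_nonneg (gibbs_nonneg c i x)]
  have h1 := gibbs_le_one c i x
  have h2 := abs_real_inner_le_norm v x
  have h3 := gibbs_nonneg c i x
  calc gibbs c i x * |⟪v, x⟫| ≤ 1 * (‖v‖ * ‖x‖) := by gcongr
    _ = _ := by ring

/-- Gaussian integration by parts turns the derivative of `E lse` along a motion `c'` of the
points `c` into a Gibbs average of `⟪c i - c j, c' i - c' j⟫`; hence that derivative is nonnegative
as soon as all these inner products are. -/
lemma gibbs_ibp (c c' : ι → E)
    (h : ∀ i j, 0 ≤ ⟪c i - c j, c' i - c' j⟫) :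
    0 ≤ ∫ x, ∑ i, gibbs c i x * ⟪c' i, x⟫ ∂(stdG E) := by
  have hbd : ∀ i, Integrable (fun x => gibbs c i x * (⟪c i, c' i⟫ -
      ∑ j, gibbs c j x * ⟪c j, c' i⟫)) (stdG E) := by
    intro i
    have hcont : Continuous (fun x => gibbs c i x * (⟪c i, c' i⟫ -
      ∑ j, gibbs c j x * ⟪c j, c' i⟫)) := by
      have := continuous_gibbs c
      fun_prop
    refine integrable_stdG_of_le hcont.aestronglyMeasurable
      (|⟪c i, c' i⟫| + ∑ j, |⟪c j, c' i⟫|) 0 0 (fun x => ?_)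
    rw [abs_mul, abs_of_nonneg (gibbs_nonneg c i x), zero_mul, add_zero]
    calc _ ≤ 1 * |⟪c i, c' i⟫ - ∑ j, gibbs c j x * ⟪c j, c' i⟫| := by
            gcongr; exact gibbs_le_one c i x
      _ ≤ |⟪c i, c' i⟫| + |∑ j, gibbs c j x * ⟪c j, c' i⟫| := by
            rw [one_mul]; exact abs_sub _ _
      _ ≤ _ := by
            gcongr
            refine (Finset.abs_sum_le_sum_abs _ _).trans (Finset.sum_le_sum fun j _ => ?_)
            rw [abs_mul, abs_of_nonneg (gibbs_nonneg c j x)]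
            exact mul_le_of_le_one_left (abs_nonneg _) (gibbs_le_one c j x)
  have h1 : ∀ i, ∫ x, gibbs c i x * ⟪c' i, x⟫ ∂(stdG E) =
      ∫ x, gibbs c i x * (⟪c i, c' i⟫ - ∑ j, gibbs c j x * ⟪c j, c' i⟫) ∂(stdG E) := by
    intro i
    have := gauss_ibp (gibbs c i) _ (hasFDerivAt_gibbs c i) (c' i) ?_ ?_
      (integrable_gibbs_mul_inner c i (c' i))
    · rw [this]
      simp
    · refine integrable_stdG_of_le (continuous_gibbs c i).aestronglyMeasurable 1 0 0 (fun x => ?_)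
      rw [abs_of_nonneg (gibbs_nonneg c i x)]
      simpa using gibbs_le_one c i x
    · simpa using hbd i
  rw [integral_finsetSum _ (fun i _ => integrable_gibbs_mul_inner c i (c' i))]
  simp_rw [h1]
  rw [← integral_finsetSum _ (fun i _ => hbd i)]
  refine integral_nonneg fun x => ?_
  -- symmetrize the covariance of `c` and `c'` under the Gibbs weights
  have key : ∑ i, gibbs c i x * (⟪c i, c' i⟫ - ∑ j, gibbs c j x * ⟪c j, c' i⟫) =
      (1/2) * ∑ i, ∑ j, gibbs c i x * gibbs c j x * ⟪c i - c j, c' i - c' j⟫ := by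
    have hs := sum_gibbs c x
    set p : ι → ℝ := fun i => gibbs c i x with hp
    have hs' : ∑ i, p i = 1 := hs
    have e1 : ∑ i, ∑ j, p i * p j * ⟪c i - c j, c' i - c' j⟫ =
        ∑ i, ∑ j, p i * p j * ⟪c i, c' i⟫ + ∑ i, ∑ j, p i * p j * ⟪c j, c' j⟫
        - ∑ i, ∑ j, p i * p j * ⟪c j, c' i⟫ - ∑ i, ∑ j, p i * p j * ⟪c i, c' j⟫ := by
      simp_rw [← Finset.sum_add_distrib, ← Finset.sum_sub_distrib]
      refine Finset.sum_congr rfl fun i _ => Finset.sum_congr rfl fun j _ => ?_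
      rw [inner_sub_left, inner_sub_right, inner_sub_right]
      ring
    have e2 : ∑ i, ∑ j, p i * p j * ⟪c i, c' j⟫ = ∑ i, ∑ j, p i * p j * ⟪c j, c' i⟫ := by
      rw [Finset.sum_comm]
      refine Finset.sum_congr rfl fun i _ => Finset.sum_congr rfl fun j _ => ?_
      ring
    have e3 : ∑ i, ∑ j, p i * p j * ⟪c j, c' j⟫ = ∑ i, ∑ j, p i * p j * ⟪c i, c' i⟫ := by
      rw [Finset.sum_comm]
      refine Finset.sum_congr rfl fun i _ => Finset.sum_congr rfl fun j _ => ?_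
      ring
    have e4 : ∑ i, ∑ j, p i * p j * ⟪c i, c' i⟫ = ∑ i, p i * ⟪c i, c' i⟫ := by
      refine Finset.sum_congr rfl fun i _ => ?_
      have : ∑ j, p i * p j * ⟪c i, c' i⟫ = (∑ j, p j) * (p i * ⟪c i, c' i⟫) := by
        rw [Finset.sum_mul]
        exact Finset.sum_congr rfl fun j _ => by ring
      rw [this, hs', one_mul]
    rw [e1, e2, e3, e4]
    change ∑ i, p i * (⟪c i, c' i⟫ - ∑ j, p j * ⟪c j, c' i⟫) = _
    have e5 : ∑ i, p i * (⟪c i, c' i⟫ - ∑ j, p j * ⟪c j, c' i⟫) =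
        ∑ i, p i * ⟪c i, c' i⟫ - ∑ i, ∑ j, p i * p j * ⟪c j, c' i⟫ := by
      simp_rw [mul_sub, Finset.sum_sub_distrib, Finset.mul_sum, ← mul_assoc]
    rw [e5]
    ring
  rw [key]
  refine mul_nonneg (by norm_num) (Finset.sum_nonneg fun i _ => Finset.sum_nonneg fun j _ => ?_)
  exact mul_nonneg (mul_nonneg (gibbs_nonneg c i x) (gibbs_nonneg c j x)) (h i j)

/-- Comparison for families in mutually orthogonal positions, by rotating `a` into `b`. -/
lemma lse_comparison (a b : ι → E) (hab : ∀ i j, ⟪a i, b j⟫ = 0)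
    (h : ∀ i j, ‖a i - a j‖ ≤ ‖b i - b j‖) :
    ∫ x, lse a x ∂(stdG E) ≤ ∫ x, lse b x ∂(stdG E) := by
  let c : ℝ → ι → E := fun t i => Real.cos t • a i + Real.sin t • b i
  let c' : ℝ → ι → E := fun t i => -Real.sin t • a i + Real.cos t • b i
  have hder : ∀ t, HasDerivAt (fun t => ∫ x, lse (c t) x ∂(stdG E))
      (∫ x, ∑ i, gibbs (c t) i x * ⟪c' t i, x⟫ ∂(stdG E)) t := by
    intro t
    refine (hasDerivAt_integral_of_dominated_loc_of_deriv_le (𝕜 := ℝ)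
      (F := fun t x => lse (c t) x) (F' := fun t x => ∑ i, gibbs (c t) i x * ⟪c' t i, x⟫)
      (s := Set.univ) (bound := fun x : E => (∑ i, (‖a i‖ + ‖b i‖)) * ‖x‖) Filter.univ_mem
      (Filter.Eventually.of_forall fun t => (continuous_lse (c t)).aestronglyMeasurable)
      (integrable_lse (c t)) ?_ ?_ ?_ ?_).2
    · have := continuous_gibbs (c t)
      have : Continuous fun x => ∑ i, gibbs (c t) i x * ⟪c' t i, x⟫ := by fun_prop
      exact this.aestronglyMeasurable
    · refine Filter.Eventually.of_forall fun x t _ => ?_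
      rw [Real.norm_eq_abs, Finset.sum_mul]
      refine (Finset.abs_sum_le_sum_abs _ _).trans (Finset.sum_le_sum fun i _ => ?_)
      rw [abs_mul, abs_of_nonneg (gibbs_nonneg _ i x)]
      have h1 : ‖c' t i‖ ≤ ‖a i‖ + ‖b i‖ := by
        refine (norm_add_le _ _).trans ?_
        rw [norm_smul, norm_smul, norm_neg, Real.norm_eq_abs, Real.norm_eq_abs]
        gcongr
        · exact mul_le_of_le_one_left (norm_nonneg _) (Real.abs_sin_le_one t)
        · exact mul_le_of_le_one_left (norm_nonneg _) (Real.abs_cos_le_one t)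
      calc gibbs (c t) i x * |⟪c' t i, x⟫| ≤ 1 * (‖c' t i‖ * ‖x‖) := by
            gcongr
            · exact gibbs_le_one _ i x
            · exact abs_real_inner_le_norm _ _
        _ ≤ _ := by rw [one_mul]; gcongr
    · have := (integrable_norm_pow_stdG (E := E) 1).const_mul (∑ i, (‖a i‖ + ‖b i‖))
      simpa using this
    · refine Filter.Eventually.of_forall fun x t _ => ?_
      have h1 : ∀ i, HasDerivAt (fun t => ⟪c t i, x⟫) ⟪c' t i, x⟫ t := by
        intro i
        have := (((Real.hasDerivAt_cos t).mul_const ⟪a i, x⟫).add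
          ((Real.hasDerivAt_sin t).mul_const ⟪b i, x⟫))
        simp only [c, c', inner_add_left, real_inner_smul_left]
        exact this
      have h2 : HasDerivAt (fun t => ∑ i, rexp ⟪c t i, x⟫)
          (∑ i, rexp ⟪c t i, x⟫ * ⟪c' t i, x⟫) t :=
        HasDerivAt.fun_sum fun i _ => (h1 i).exp
      refine (h2.log (sum_exp_pos (c t) x).ne').congr_deriv ?_
      simp_rw [gibbs_eq, Finset.sum_div]
      exact Finset.sum_congr rfl fun i _ => by ring
  have hmono : MonotoneOn (fun t => ∫ x, lse (c t) x ∂(stdG E)) (Set.Icc 0 (π / 2)) := by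
    refine monotoneOn_of_deriv_nonneg (convex_Icc _ _)
      (fun t _ => (hder t).continuousAt.continuousWithinAt)
      (fun t _ => (hder t).differentiableAt.differentiableWithinAt) (fun t ht => ?_)
    rw [interior_Icc] at ht
    rw [(hder t).deriv]
    refine gibbs_ibp (c t) (c' t) fun i j => ?_
    have e1 : c t i - c t j = Real.cos t • (a i - a j) + Real.sin t • (b i - b j) := by
      simp only [c, smul_sub]; abel
    have e2 : c' t i - c' t j = -Real.sin t • (a i - a j) + Real.cos t • (b i - b j) := by
      simp only [c', smul_sub]; abel
    have e3 : ⟪a i - a j, b i - b j⟫ = 0 := by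
      simp [inner_sub_left, inner_sub_right, hab]
    rw [e1, e2]
    simp only [inner_add_left, inner_add_right, real_inner_smul_left, real_inner_smul_right]
    rw [real_inner_comm (a i - a j) (b i - b j), e3, real_inner_self_eq_norm_sq,
      real_inner_self_eq_norm_sq]
    have hs : 0 ≤ Real.sin t := (Real.sin_pos_of_pos_of_lt_pi ht.1 (by linarith [ht.1, ht.2])).le
    have hc : 0 ≤ Real.cos t := (Real.cos_pos_of_mem_Ioo ⟨by linarith [ht.1, ht.2], ht.2⟩).le
    have hn : ‖a i - a j‖ ^ 2 ≤ ‖b i - b j‖ ^ 2 := by gcongr; exact h i j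
    nlinarith [mul_nonneg (mul_nonneg hs hc) (sub_nonneg.2 hn)]
  have := hmono (Set.left_mem_Icc.2 (by positivity)) (Set.right_mem_Icc.2 (by positivity))
    (by positivity)
  simpa [c] using this

lemma stdG_map_fst : (stdG (WithLp 2 (E × F))).map (fun z => z.fst) = stdG E := by
  refine stdG_map (WithLp.fstL 2 ℝ E F) (fun t => WithLp.toLp 2 (t, 0)) (fun x t => ?_)
    (fun t => ?_)
  · simp [WithLp.prod_inner_apply]
  · simp

lemma stdG_map_snd : (stdG (WithLp 2 (E × F))).map (fun z => z.snd) = stdG F := by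
  refine stdG_map (WithLp.sndL 2 ℝ E F) (fun t => WithLp.toLp 2 (0, t)) (fun x t => ?_)
    (fun t => ?_)
  · simp [WithLp.prod_inner_apply]
  · simp

/-- The log-sum-exp form of the Sudakov–Fernique inequality. Placing the two families in
orthogonal summands of one space reduces it to `lse_comparison`. -/
lemma lse_comparison' (a : ι → E) (b : ι → F) (h : ∀ i j, ‖a i - a j‖ ≤ ‖b i - b j‖) :
    ∫ x, lse a x ∂(stdG E) ≤ ∫ x, lse b x ∂(stdG F) := by
  rw [← stdG_map_fst (E := E) (F := F), ← stdG_map_snd (E := E) (F := F),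
    integral_map (μ := stdG (WithLp 2 (E × F))) (φ := fun z => z.fst)
      (WithLp.fstL 2 ℝ E F).continuous.measurable.aemeasurable (continuous_lse a).aestronglyMeasurable,
    integral_map (μ := stdG (WithLp 2 (E × F))) (φ := fun z => z.snd)
      (WithLp.sndL 2 ℝ E F).continuous.measurable.aemeasurable (continuous_lse b).aestronglyMeasurable]
  have := lse_comparison (E := WithLp 2 (E × F)) (fun i => WithLp.toLp 2 (a i, 0))
    (fun i => WithLp.toLp 2 (0, b i)) (fun i j => by simp [WithLp.prod_inner_apply])
    (fun i j => by
      rw [← WithLp.toLp_sub, ← WithLp.toLp_sub]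
      simpa [WithLp.prod_norm_eq_of_L2] using h i j)
  simpa [lse, WithLp.prod_inner_apply] using this

/-- The **Sudakov–Fernique inequality** for finite families of linear functionals, with the
maximum of the dominating family replaced by any integrable majorant `Φ`. -/
lemma sudakov_fernique (a : ι → E) (b : ι → F) (h : ∀ i j, ‖a i - a j‖ ≤ ‖b i - b j‖)
    (m : E → ℝ) (hm : Integrable m (stdG E)) (hma : ∀ x, ∃ i, m x ≤ ⟪a i, x⟫)
    (Φ : F → ℝ) (hΦ : Integrable Φ (stdG F)) (hb : ∀ i x, ⟪b i, x⟫ ≤ Φ x) :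
    ∫ x, m x ∂(stdG E) ≤ ∫ x, Φ x ∂(stdG F) := by
  -- apply the smooth comparison to `β • a`, `β • b` and let `β → ∞`
  have key : ∀ β : ℝ, 0 < β → β * ∫ x, m x ∂(stdG E) ≤
      Real.log (Fintype.card ι) + β * ∫ x, Φ x ∂(stdG F) := by
    intro β hβ
    have h1 := lse_comparison' (fun i => β • a i) (fun i => β • b i) (fun i j => by
      rw [← smul_sub, ← smul_sub, norm_smul, norm_smul]
      gcongr
      exact h i j)
    have h2 : ∫ x, β * m x ∂(stdG E) ≤ ∫ x, lse (fun i => β • a i) x ∂(stdG E) := by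
      refine integral_mono (hm.const_mul β) (integrable_lse _) fun x => ?_
      obtain ⟨i, hi⟩ := hma x
      refine le_trans ?_ (le_lse (fun i => β • a i) i x)
      simp only [real_inner_smul_left]
      gcongr
    have h3 : ∫ x, lse (fun i => β • b i) x ∂(stdG F) ≤
        ∫ x, (Real.log (Fintype.card ι) + β * Φ x) ∂(stdG F) := by
      refine integral_mono (integrable_lse _) ((integrable_const _).add (hΦ.const_mul β))
        fun x => ?_
      refine lse_le _ _ _ fun i => ?_
      simp only [real_inner_smul_left]
      have := hb i x
      gcongr
    rw [integral_const_mul] at h2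
    rw [integral_add (integrable_const _) (hΦ.const_mul β), integral_const_mul] at h3
    simp at h3
    linarith
  by_contra! hlt
  set d := ∫ x, m x ∂(stdG E) - ∫ x, Φ x ∂(stdG F) with hd
  have hdpos : 0 < d := by simp only [hd]; linarith
  have hl : 0 ≤ Real.log (Fintype.card ι) := Real.log_natCast_nonneg _
  have h1 := key ((Real.log (Fintype.card ι) + 1) / d) (by positivity)
  have h2 : (Real.log (Fintype.card ι) + 1) / d * d = Real.log (Fintype.card ι) + 1 := by
    field_simp
  have h3 : (Real.log (Fintype.card ι) + 1) / d * d ≤ Real.log (Fintype.card ι) := by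
    have : (Real.log (Fintype.card ι) + 1) / d * d =
      (Real.log (Fintype.card ι) + 1) / d * ∫ x, m x ∂(stdG E) -
      (Real.log (Fintype.card ι) + 1) / d * ∫ x, Φ x ∂(stdG F) := by
        rw [← mul_sub]
    linarith
  linarith

end SudakovFernique

/-! ### Gaussian moments and polar coordinates -/

section Moments

variable {E : Type*} [NormedAddCommGroup E] [InnerProductSpace ℝ E] [FiniteDimensional ℝ E]
  [MeasurableSpace E] [BorelSpace E]

lemma integrable_inner_two (a b : E) :
    Integrable (fun x => ⟪a, x⟫ * ⟪b, x⟫) (stdG E) := by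
  refine integrable_stdG_of_le (by fun_prop) 0 (‖a‖ * ‖b‖) 2 fun x => ?_
  rw [abs_mul]
  calc |⟪a, x⟫| * |⟪b, x⟫| ≤ (‖a‖ * ‖x‖) * (‖b‖ * ‖x‖) := by
        gcongr <;> exact abs_real_inner_le_norm _ _
    _ = _ := by ring

lemma integrable_inner_one (a : E) : Integrable (fun x => ⟪a, x⟫) (stdG E) :=
  integrable_stdG_of_le (by fun_prop) 0 ‖a‖ 1 fun x => by
    simpa using abs_real_inner_le_norm a x

lemma integral_inner_two (a b : E) : ∫ x, ⟪a, x⟫ * ⟪b, x⟫ ∂(stdG E) = ⟪a, b⟫ := by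
  rw [gauss_ibp (fun x => ⟪a, x⟫) (fun _ => innerSL ℝ a)
    (fun x => (innerSL ℝ a).hasFDerivAt) b (integrable_inner_one a) (by simp)
    (integrable_inner_two a b)]
  simp

lemma integrable_inner_three (a b c : E) :
    Integrable (fun x => ⟪a, x⟫ * ⟪b, x⟫ * ⟪c, x⟫) (stdG E) := by
  refine integrable_stdG_of_le (by fun_prop) 0 (‖a‖ * ‖b‖ * ‖c‖) 3 fun x => ?_
  rw [abs_mul, abs_mul]
  calc |⟪a, x⟫| * |⟪b, x⟫| * |⟪c, x⟫| ≤ (‖a‖ * ‖x‖) * (‖b‖ * ‖x‖) * (‖c‖ * ‖x‖) := by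
        gcongr <;> exact abs_real_inner_le_norm _ _
    _ = _ := by ring

lemma integrable_inner_four (a b c d : E) :
    Integrable (fun x => ⟪a, x⟫ * ⟪b, x⟫ * ⟪c, x⟫ * ⟪d, x⟫) (stdG E) := by
  refine integrable_stdG_of_le (by fun_prop) 0 (‖a‖ * ‖b‖ * ‖c‖ * ‖d‖) 4 fun x => ?_
  rw [abs_mul, abs_mul, abs_mul]
  calc |⟪a, x⟫| * |⟪b, x⟫| * |⟪c, x⟫| * |⟪d, x⟫|
      ≤ (‖a‖ * ‖x‖) * (‖b‖ * ‖x‖) * (‖c‖ * ‖x‖) * (‖d‖ * ‖x‖) := by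
        gcongr <;> exact abs_real_inner_le_norm _ _
    _ = _ := by ring

/-- Wick's formula for four Gaussian linear functionals. -/
lemma integral_inner_four (a b c d : E) :
    ∫ x, ⟪a, x⟫ * ⟪b, x⟫ * ⟪c, x⟫ * ⟪d, x⟫ ∂(stdG E) =
      ⟪a, b⟫ * ⟪c, d⟫ + ⟪a, c⟫ * ⟪b, d⟫ + ⟪a, d⟫ * ⟪b, c⟫ := by
  have hd : ∀ x, HasFDerivAt (fun x => ⟪a, x⟫ * ⟪b, x⟫ * ⟪c, x⟫)
      ((⟪a, x⟫ * ⟪b, x⟫) • innerSL ℝ c +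
        ⟪c, x⟫ • (⟪a, x⟫ • innerSL ℝ b + ⟪b, x⟫ • innerSL ℝ a)) x := fun x =>
    (((innerSL ℝ a).hasFDerivAt (x := x)).mul ((innerSL ℝ b).hasFDerivAt (x := x))).mul
      ((innerSL ℝ c).hasFDerivAt (x := x))
  have e : ∀ x, ((⟪a, x⟫ * ⟪b, x⟫) • innerSL ℝ c +
        ⟪c, x⟫ • (⟪a, x⟫ • innerSL ℝ b + ⟪b, x⟫ • innerSL ℝ a)) d =
      ⟪c, d⟫ * (⟪a, x⟫ * ⟪b, x⟫) + ⟪b, d⟫ * (⟪a, x⟫ * ⟪c, x⟫) +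
        ⟪a, d⟫ * (⟪b, x⟫ * ⟪c, x⟫) := by
    intro x
    simp
    ring
  have i1 := (integrable_inner_two a b).const_mul ⟪c, d⟫
  have i2 := (integrable_inner_two a c).const_mul ⟪b, d⟫
  have i3 := (integrable_inner_two b c).const_mul ⟪a, d⟫
  have i12 : Integrable (fun x => ⟪c, d⟫ * (⟪a, x⟫ * ⟪b, x⟫) + ⟪b, d⟫ * (⟪a, x⟫ * ⟪c, x⟫))
      (stdG E) := i1.add i2
  rw [gauss_ibp _ _ hd d (integrable_inner_three a b c) (by
    simp_rw [e]
    exact i12.add i3) (integrable_inner_four a b c d)]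
  simp_rw [e]
  rw [integral_add i12 i3, integral_add i1 i2, integral_const_mul, integral_const_mul,
    integral_const_mul, integral_inner_two, integral_inner_two, integral_inner_two]
  ring

lemma integral_norm_sq {κ : Type*} [Fintype κ] [DecidableEq κ] :
    ∫ x, ‖x‖ ^ 2 ∂(stdG (EuclideanSpace ℝ κ)) = Fintype.card κ := by
  have h : ∀ x : EuclideanSpace ℝ κ, ‖x‖ ^ 2 =
      ∑ k, ⟪EuclideanSpace.single k (1 : ℝ), x⟫ * ⟪EuclideanSpace.single k (1 : ℝ), x⟫ := by
    intro x
    rw [EuclideanSpace.real_norm_sq_eq]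
    simp [EuclideanSpace.inner_single_left, sq]
  simp_rw [h]
  rw [integral_finsetSum _ fun k _ => integrable_inner_two _ _]
  simp_rw [integral_inner_two]
  simp

lemma integral_norm_le (n : ℕ) (hn : 1 ≤ n) :
    ∫ x, ‖x‖ ∂(stdG (EuclideanSpace ℝ (Fin n))) ≤ √n := by
  have hn' : (0 : ℝ) < n := by exact_mod_cast hn
  have hs : 0 < √(n : ℝ) := Real.sqrt_pos.2 hn'
  have hss : √(n : ℝ) * √(n : ℝ) = n := Real.mul_self_sqrt hn'.le
  have h2 := integral_norm_sq (κ := Fin n)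
  have i1 := integrable_norm_pow_stdG (E := EuclideanSpace ℝ (Fin n)) 1
  simp only [pow_one] at i1
  have i2 := integrable_norm_pow_stdG (E := EuclideanSpace ℝ (Fin n)) 2
  have h : ∫ x, ‖x‖ ∂(stdG (EuclideanSpace ℝ (Fin n))) ≤
      ∫ x, ((1 / (2 * √n)) * ‖x‖ ^ 2 + √n / 2) ∂(stdG (EuclideanSpace ℝ (Fin n))) := by
    refine integral_mono i1 ((i2.const_mul _).add (integrable_const _)) fun x => ?_
    have : (1 / (2 * √n)) * ‖x‖ ^ 2 + √n / 2 - ‖x‖ = (1 / (2 * √n)) * (‖x‖ - √n) ^ 2 := by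
      field_simp
      ring
    have h3 : 0 ≤ (1 / (2 * √n)) * (‖x‖ - √n) ^ 2 := by positivity
    simp only
    linarith
  refine h.trans (le_of_eq ?_)
  rw [integral_add (i2.const_mul _) (integrable_const _), integral_const_mul, h2]
  simp
  field_simp
  nlinarith

/-- Polar coordinates for the Gaussian integral of a positively homogeneous function. -/
lemma integral_polar [Nontrivial E] (ψ : E → ℝ)
    (hψ : ∀ (c : ℝ), 0 < c → ∀ x, ψ (c • x) = c * ψ x) :
    ∫ x, ψ x ∂(stdG E) = (∫ x : Metric.sphere (0 : E) 1, ψ x ∂(volume : Measure E).toSphere) *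
      ∫ r : Set.Ioi (0 : ℝ), gaussConst E * rexp (-r.1 ^ 2 / 2) * r.1
        ∂(Measure.volumeIoiPow (Module.finrank ℝ E - 1)) := by
  rw [integral_stdG, ← integral_prod_mul,
    ← (Measure.measurePreserving_homeomorphUnitSphereProd (volume : Measure E)).integral_comp
      (homeomorphUnitSphereProd E).measurableEmbedding,
    ← restrict_compl_singleton (μ := volume) (0 : E),
    ← integral_subtype_comap (measurableSet_singleton _).compl,
    restrict_compl_singleton (μ := volume) (0 : E)]
  refine integral_congr_ae (Filter.Eventually.of_forall fun x => ?_)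
  have hx : (0 : ℝ) < ‖(x : E)‖ := norm_pos_iff.2 x.2
  have h1 : ψ (x : E) = ‖(x : E)‖ * ψ (‖(x : E)‖⁻¹ • (x : E)) := by
    rw [← hψ _ hx, smul_smul, mul_inv_cancel₀ hx.ne', one_smul]
  simp only [homeomorphUnitSphereProd_apply_snd_coe, homeomorphUnitSphereProd_apply_fst_coe]
  rw [h1]
  ring

/-- The Gaussian mean of a positively homogeneous function is its spherical mean times the
Gaussian mean of the norm. -/
lemma integral_homogeneous [Nontrivial E] (φ : E → ℝ)
    (hφ : ∀ (c : ℝ), 0 < c → ∀ x, φ (c • x) = c * φ x) :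
    ∫ x, φ x ∂(stdG E) =
      (∫ x : Metric.sphere (0 : E) 1, φ x ∂(((volume : Measure E).toSphere Set.univ)⁻¹ •
        (volume : Measure E).toSphere)) * ∫ x, ‖x‖ ∂(stdG E) := by
  have hnorm := integral_polar (fun x : E => ‖x‖) (fun c hc x => by
    rw [norm_smul, Real.norm_of_nonneg hc.le])
  rw [integral_polar φ hφ, hnorm, integral_smul_measure]
  have h1 : ∫ x : Metric.sphere (0 : E) 1, ‖(x : E)‖ ∂(volume : Measure E).toSphere =
      ((volume : Measure E).toSphere Set.univ).toReal := by
    simp [Measure.real]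
  rw [h1, smul_eq_mul, ENNReal.toReal_inv]
  have h2 : ((volume : Measure E).toSphere Set.univ).toReal ≠ 0 := by
    rw [ENNReal.toReal_ne_zero]
    exact ⟨Measure.measure_univ_ne_zero.2 (Measure.toSphere_ne_zero _), measure_ne_top _ _⟩
  field_simp

end Moments

/-! ### The Chevet inequality -/

section Chevet

variable {n : ℕ}

/-- The rank-one matrix `y xᵀ`, as a vector of the Euclidean space of `n × n` matrices. -/
def tensorVec (x y : EuclideanSpace ℝ (Fin n)) : EuclideanSpace ℝ (Fin n × Fin n) :=
  WithLp.toLp 2 fun p => y p.1 * x p.2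

lemma norm_tensorVec (x y : EuclideanSpace ℝ (Fin n)) : ‖tensorVec x y‖ = ‖x‖ * ‖y‖ := by
  have h : ‖tensorVec x y‖ ^ 2 = (‖x‖ * ‖y‖) ^ 2 := by
    rw [mul_pow, EuclideanSpace.real_norm_sq_eq, EuclideanSpace.real_norm_sq_eq,
      EuclideanSpace.real_norm_sq_eq, Fintype.sum_prod_type, mul_comm, Finset.sum_mul_sum]
    simp [tensorVec, mul_pow]
  exact (pow_left_inj₀ (norm_nonneg _) (by positivity) two_ne_zero).1 h

lemma tensorVec_sub (x y x' y' : EuclideanSpace ℝ (Fin n)) :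
    tensorVec x y - tensorVec x' y' = tensorVec x (y - y') + tensorVec (x - x') y' := by
  ext p
  simp [tensorVec]
  ring

/-- The support function of the set of rank-one matrices `y_k x_kᵀ`, evaluated at `g`; if the
pairs `(x_k, y_k)` are dense in `K × T°`, it is the operator norm of `g` from `K` to `T`. -/
def supF (x y : ℕ → EuclideanSpace ℝ (Fin n)) (g : EuclideanSpace ℝ (Fin n × Fin n)) : ℝ :=
  ⨆ k, ⟪tensorVec (x k) (y k), g⟫

variable {x y : ℕ → EuclideanSpace ℝ (Fin n)} {R L : ℝ}

lemma inner_tensorVec_le (hx : ∀ k, ‖x k‖ ≤ R) (hy : ∀ k, ‖y k‖ ≤ L) (k : ℕ)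
    (g : EuclideanSpace ℝ (Fin n × Fin n)) :
    |⟪tensorVec (x k) (y k), g⟫| ≤ R * L * ‖g‖ := by
  refine (abs_real_inner_le_norm _ _).trans ?_
  rw [norm_tensorVec]
  have h0 : 0 ≤ R := (norm_nonneg _).trans (hx 0)
  gcongr
  exacts [hx k, hy k]

lemma bddAbove_supF (hx : ∀ k, ‖x k‖ ≤ R) (hy : ∀ k, ‖y k‖ ≤ L)
    (g : EuclideanSpace ℝ (Fin n × Fin n)) :
    BddAbove (Set.range fun k => ⟪tensorVec (x k) (y k), g⟫) :=
  ⟨R * L * ‖g‖, by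
    rintro _ ⟨k, rfl⟩
    exact (le_abs_self _).trans (inner_tensorVec_le hx hy k g)⟩

lemma supF_le (hx : ∀ k, ‖x k‖ ≤ R) (hy : ∀ k, ‖y k‖ ≤ L)
    (g : EuclideanSpace ℝ (Fin n × Fin n)) : supF x y g ≤ R * L * ‖g‖ :=
  ciSup_le fun k => (le_abs_self _).trans (inner_tensorVec_le hx hy k g)

lemma le_supF (hx : ∀ k, ‖x k‖ ≤ R) (hy : ∀ k, ‖y k‖ ≤ L)
    (g : EuclideanSpace ℝ (Fin n × Fin n)) (k : ℕ) :
    ⟪tensorVec (x k) (y k), g⟫ ≤ supF x y g := le_ciSup (bddAbove_supF hx hy g) k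

lemma supF_nonneg (hx : ∀ k, ‖x k‖ ≤ R) (hy : ∀ k, ‖y k‖ ≤ L) (hx0 : x 0 = 0)
    (g : EuclideanSpace ℝ (Fin n × Fin n)) : 0 ≤ supF x y g := by
  refine le_trans (le_of_eq ?_) (le_supF hx hy g 0)
  have : tensorVec (x 0) (y 0) = 0 := by
    rw [← norm_eq_zero, norm_tensorVec, hx0, norm_zero, zero_mul]
  rw [this, inner_zero_left]

lemma supF_add (hx : ∀ k, ‖x k‖ ≤ R) (hy : ∀ k, ‖y k‖ ≤ L)
    (g h : EuclideanSpace ℝ (Fin n × Fin n)) : supF x y (g + h) ≤ supF x y g + supF x y h :=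
  ciSup_le fun k => by
    rw [inner_add_right]
    exact add_le_add (le_supF hx hy g k) (le_supF hx hy h k)

lemma supF_smul (c : ℝ) (hc : 0 ≤ c) (g : EuclideanSpace ℝ (Fin n × Fin n)) :
    supF x y (c • g) = c * supF x y g := by
  simp only [supF, inner_smul_right]
  exact (Real.mul_iSup_of_nonneg hc _).symm

lemma continuous_supF (hx : ∀ k, ‖x k‖ ≤ R) (hy : ∀ k, ‖y k‖ ≤ L) : Continuous (supF x y) := by
  have h0 : 0 ≤ R := (norm_nonneg _).trans (hx 0)
  have h1 : 0 ≤ L := (norm_nonneg _).trans (hy 0)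
  have : LipschitzWith (Real.toNNReal (R * L)) (supF x y) :=
    LipschitzWith.of_le_add_mul' _ fun g h => by
      have h2 := supF_add hx hy h (g - h)
      have h3 := supF_le hx hy (g - h)
      rw [add_sub_cancel] at h2
      rw [dist_eq_norm]
      linarith
  exact this.continuous

/-- **Chevet's inequality** for the Gaussian mean of the supremum of a sequence of rank-one
functionals. -/
lemma chevet (hx : ∀ k, ‖x k‖ ≤ R) (hy : ∀ k, ‖y k‖ ≤ L)
    (p q : EuclideanSpace ℝ (Fin n) → ℝ)
    (hp : Integrable p (stdG _)) (hq : Integrable q (stdG _))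
    (hpy : ∀ k z, ⟪y k, z⟫ ≤ p z) (hqx : ∀ k z, ⟪x k, z⟫ ≤ q z) :
    ∫ g, supF x y g ∂(stdG (EuclideanSpace ℝ (Fin n × Fin n))) ≤
      √2 * (R * ∫ z, p z ∂(stdG (EuclideanSpace ℝ (Fin n))) +
        L * ∫ z, q z ∂(stdG (EuclideanSpace ℝ (Fin n)))) := by
  have h0 : 0 ≤ R := (norm_nonneg _).trans (hx 0)
  have h1 : 0 ≤ L := (norm_nonneg _).trans (hy 0)
  let V := EuclideanSpace ℝ (Fin n)
  -- finite maxima, to which `sudakov_fernique` applies; they increase to `supF x y`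
  let f : ℕ → EuclideanSpace ℝ (Fin n × Fin n) → ℝ := fun m g =>
    partialSups (fun k => ⟪tensorVec (x k) (y k), g⟫) m
  have hmeas : ∀ m, Measurable (f m) := by
    intro m
    induction m with
    | zero => simp only [f, partialSups_zero]; fun_prop
    | succ m ih =>
      have : f (m + 1) = fun g => f m g ⊔ ⟪tensorVec (x (m + 1)) (y (m + 1)), g⟫ := by
        funext g; simp only [f, partialSups_add_one]
      rw [this]
      exact ih.sup (by fun_prop)
  have hbound : ∀ m g, |f m g| ≤ R * L * ‖g‖ := by
    intro m g
    rw [abs_le]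
    constructor
    · exact (abs_le.1 (inner_tensorVec_le hx hy m g)).1.trans
        (le_partialSups (fun k => ⟪tensorVec (x k) (y k), g⟫) m)
    · exact partialSups_le _ _ _ fun k _ => (abs_le.1 (inner_tensorVec_le hx hy k g)).2
  have hintn : Integrable (fun g : EuclideanSpace ℝ (Fin n × Fin n) => R * L * ‖g‖) (stdG _) := by
    have := (integrable_norm_pow_stdG (E := EuclideanSpace ℝ (Fin n × Fin n)) 1).const_mul (R * L)
    simpa using this
  have hint : ∀ m, Integrable (f m) (stdG _) := fun m =>
    hintn.mono' (hmeas m).aestronglyMeasurable (Filter.Eventually.of_forall (hbound m))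
  have hlim : Filter.Tendsto (fun m => ∫ g, f m g ∂(stdG _)) Filter.atTop
      (nhds (∫ g, supF x y g ∂(stdG _))) := by
    refine tendsto_integral_of_dominated_convergence _
      (fun m => (hmeas m).aestronglyMeasurable) hintn
      (fun m => Filter.Eventually.of_forall (hbound m)) (Filter.Eventually.of_forall fun g => ?_)
    have hb := bddAbove_supF hx hy g
    have := tendsto_atTop_ciSup (partialSups (fun k => ⟪tensorVec (x k) (y k), g⟫)).monotone
      (bddAbove_range_partialSups.2 hb)
    rwa [ciSup_partialSups_eq hb] at this
  refine le_of_tendsto' hlim fun m => ?_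
  -- the comparison process `√2 (R ⟨y, z₁⟩ + L ⟨x, z₂⟩)`
  let b : Fin (m + 1) → WithLp 2 (V × V) := fun k =>
    WithLp.toLp 2 ((√2 * R) • y k, (√2 * L) • x k)
  have hfst : MeasurePreserving (fun z : WithLp 2 (V × V) => z.fst) (stdG _) (stdG V) :=
    ⟨by fun_prop, stdG_map_fst⟩
  have hsnd : MeasurePreserving (fun z : WithLp 2 (V × V) => z.snd) (stdG _) (stdG V) :=
    ⟨by fun_prop, stdG_map_snd⟩
  have ip : Integrable (fun z : WithLp 2 (V × V) => (√2 * R) * p z.fst) (stdG _) :=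
    (hfst.integrable_comp_of_integrable hp).const_mul _
  have iq : Integrable (fun z : WithLp 2 (V × V) => (√2 * L) * q z.snd) (stdG _) :=
    (hsnd.integrable_comp_of_integrable hq).const_mul _
  have key := sudakov_fernique (fun k : Fin (m + 1) => tensorVec (x k) (y k)) b ?_ (f m) (hint m)
    ?_ (fun z => (√2 * R) * p z.fst + (√2 * L) * q z.snd) (ip.add iq) ?_
  · refine key.trans (le_of_eq ?_)
    have ep : ∫ z : WithLp 2 (V × V), p z.fst ∂(stdG _) = ∫ z, p z ∂(stdG V) := by
      rw [← hfst.map_eq, integral_map hfst.measurable.aemeasurable]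
      rw [hfst.map_eq]
      exact hp.1
    have eq : ∫ z : WithLp 2 (V × V), q z.snd ∂(stdG _) = ∫ z, q z ∂(stdG V) := by
      rw [← hsnd.map_eq, integral_map hsnd.measurable.aemeasurable]
      rw [hsnd.map_eq]
      exact hq.1
    rw [integral_add ip iq, integral_const_mul, integral_const_mul, ep, eq]
    ring
  · intro i j
    have h2 : ‖b i - b j‖ ^ 2 = 2 * (R * ‖y i - y j‖) ^ 2 + 2 * (L * ‖x i - x j‖) ^ 2 := by
      rw [WithLp.prod_norm_sq_eq_of_L2]
      have e1 : (b i - b j).fst = (√2 * R) • (y i - y j) := by rw [smul_sub]; rfl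
      have e2 : (b i - b j).snd = (√2 * L) • (x i - x j) := by rw [smul_sub]; rfl
      rw [e1, e2, norm_smul, norm_smul, Real.norm_of_nonneg (by positivity),
        Real.norm_of_nonneg (by positivity)]
      simp only [mul_pow, Real.sq_sqrt zero_le_two]
      ring
    refine le_of_sq_le_sq ?_ (norm_nonneg _)
    have h3 : ‖tensorVec (x i) (y i) - tensorVec (x j) (y j)‖ ≤
        R * ‖y i - y j‖ + L * ‖x i - x j‖ := by
      rw [tensorVec_sub]
      refine (norm_add_le _ _).trans ?_
      rw [norm_tensorVec, norm_tensorVec, mul_comm ‖x i - x j‖]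
      gcongr
      exacts [hx _, hy _]
    rw [h2]
    calc _ ≤ (R * ‖y i - y j‖ + L * ‖x i - x j‖) ^ 2 := by gcongr
      _ ≤ _ := by nlinarith [sq_nonneg (R * ‖y i - y j‖ - L * ‖x i - x j‖)]
  · intro g
    obtain ⟨k, hk, hk'⟩ := exists_partialSups_eq (fun k => ⟪tensorVec (x k) (y k), g⟫) m
    exact ⟨⟨k, Nat.lt_succ_of_le hk⟩, hk'.le⟩
  · intro k z
    rw [WithLp.prod_inner_apply]
    simp only [b, real_inner_smul_left]
    exact add_le_add (mul_le_mul_of_nonneg_left (hpy k z.fst) (by positivity))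
      (mul_le_mul_of_nonneg_left (hqx k z.snd) (by positivity))

end Chevet

/-! ### Singular values and invariant sublinear functions -/

section SVD

variable {n : ℕ}

lemma basisMatrix_mem (b : OrthonormalBasis (Fin n) ℝ (EuclideanSpace ℝ (Fin n))) :
    (Matrix.of fun i j => b j i) ∈ Matrix.orthogonalGroup (Fin n) ℝ := by
  rw [Matrix.mem_orthogonalGroup_iff']
  ext i j
  have h := b.inner_eq_ite i j
  rw [EuclideanSpace.inner_eq_star_dotProduct] at h
  rw [Matrix.one_apply, ← h]
  simp [Matrix.mul_apply, dotProduct, mul_comm]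

lemma transpose_mem {P : Matrix (Fin n) (Fin n) ℝ} (hP : P ∈ Matrix.orthogonalGroup (Fin n) ℝ) :
    P.transpose ∈ Matrix.orthogonalGroup (Fin n) ℝ := by
  rw [Matrix.mem_orthogonalGroup_iff, Matrix.transpose_transpose]
  exact (Matrix.mem_orthogonalGroup_iff' _ _).1 hP

/-- The singular value decomposition of a square real matrix. -/
lemma exists_svd (A : Matrix (Fin n) (Fin n) ℝ) :
    ∃ P ∈ Matrix.orthogonalGroup (Fin n) ℝ, ∃ Q ∈ Matrix.orthogonalGroup (Fin n) ℝ,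
      ∃ s : Fin n → ℝ, (∀ i, 0 ≤ s i) ∧ A = P * Matrix.diagonal s * Q := by
  have hps : (A.transpose * A).PosSemidef := by
    simpa using Matrix.posSemidef_conjTranspose_mul_self A
  have hH := hps.isHermitian
  let v := hH.eigenvectorBasis
  let l := hH.eigenvalues
  have hl : ∀ i, 0 ≤ l i := hps.eigenvalues_nonneg
  let Av : Fin n → EuclideanSpace ℝ (Fin n) := fun i => WithLp.toLp 2 (A.mulVec (v i))
  have hAv : ∀ i j, ⟪Av i, Av j⟫ = if i = j then l j else 0 := by
    intro i j
    have h1 : ⟪Av i, Av j⟫ = l j * ⟪v i, v j⟫ := by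
      rw [EuclideanSpace.inner_eq_star_dotProduct, EuclideanSpace.inner_eq_star_dotProduct]
      simp only [Av, star_trivial]
      rw [dotProduct_comm, Matrix.dotProduct_mulVec, ← Matrix.mulVec_transpose,
        Matrix.mulVec_mulVec, ← dotProduct_comm]
      have := hH.mulVec_eigenvectorBasis i
      rw [show (v i).ofLp = (hH.eigenvectorBasis i).ofLp from rfl, this]
      by_cases hij : i = j
      · subst hij
        rw [dotProduct_smul, smul_eq_mul]
      · have h0 := v.inner_eq_ite i j
        rw [if_neg hij, EuclideanSpace.inner_eq_star_dotProduct, star_trivial] at h0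
        rw [dotProduct_smul, smul_eq_mul, show (hH.eigenvectorBasis i).ofLp = (v i).ofLp from rfl,
          h0, mul_zero, mul_zero]
    rw [h1, v.inner_eq_ite]
    split_ifs <;> simp
  let u : Fin n → EuclideanSpace ℝ (Fin n) := fun i => (√(l i))⁻¹ • Av i
  have hu : Orthonormal ℝ (({i | l i ≠ 0} : Set (Fin n)).domRestrict u) := by
    rw [orthonormal_iff_ite]
    rintro ⟨i, hi⟩ ⟨j, hj⟩
    simp only [Set.domRestrict_apply, u, real_inner_smul_left, real_inner_smul_right, hAv,
      Subtype.mk.injEq]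
    split_ifs with hij
    · subst hij
      have : 0 < √(l i) := Real.sqrt_pos.2 (lt_of_le_of_ne (hl i) (Ne.symm hi))
      have h2 : √(l i) * √(l i) = l i := Real.mul_self_sqrt (hl i)
      field_simp
      nlinarith
    · simp
  obtain ⟨b, hb⟩ := hu.exists_orthonormalBasis_extension_of_card_eq (by simp)
  have hAb : ∀ i, Av i = √(l i) • b i := by
    intro i
    by_cases hi : l i = 0
    · have : ⟪Av i, Av i⟫ = 0 := by rw [hAv, if_pos rfl, hi]
      rw [inner_self_eq_zero.1 this, hi, Real.sqrt_zero, zero_smul]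
    · have : √(l i) ≠ 0 := Real.sqrt_ne_zero'.2 (lt_of_le_of_ne (hl i) (Ne.symm hi))
      rw [hb i hi, smul_smul, mul_inv_cancel₀ this, one_smul]
  refine ⟨_, basisMatrix_mem b, _, transpose_mem (basisMatrix_mem v), fun i => √(l i),
    fun i => Real.sqrt_nonneg _, ?_⟩
  have hv := (Matrix.mem_orthogonalGroup_iff _ _).1 (basisMatrix_mem v)
  have hAV : A * (Matrix.of fun i j => v j i) =
      (Matrix.of fun i j => b j i) * Matrix.diagonal fun i => √(l i) := by
    ext i j
    rw [Matrix.mul_diagonal]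
    have := congrArg (fun z : EuclideanSpace ℝ (Fin n) => z i) (hAb j)
    simpa [Av, Matrix.mul_apply, Matrix.mulVec, dotProduct, mul_comm] using this
  rw [← hAV, Matrix.mul_assoc, hv, Matrix.mul_one]

lemma permMatrix_conj (σ : Equiv.Perm (Fin n)) (s : Fin n → ℝ) :
    σ.permMatrix ℝ ∈ Matrix.orthogonalGroup (Fin n) ℝ ∧
    σ.permMatrix ℝ * Matrix.diagonal s * (σ.permMatrix ℝ).transpose = Matrix.diagonal (s ∘ σ) := by
  have h : ∀ t : Fin n → ℝ, σ.permMatrix ℝ * Matrix.diagonal t * (σ.permMatrix ℝ).transpose =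
      Matrix.diagonal (t ∘ σ) := by
    intro t
    ext i j
    rw [Matrix.mul_apply]
    simp [Equiv.Perm.permMatrix, PEquiv.toMatrix, Matrix.mul_diagonal,
      Matrix.diagonal_apply, ← ite_and]
    by_cases hij : i = j
    · subst hij
      simp
    · simp only [hij, if_false]
      refine Finset.sum_eq_zero fun k _ => if_neg ?_
      rintro ⟨h1, h2⟩
      exact hij (σ.injective (h2.trans h1.symm))
  refine ⟨?_, h s⟩
  rw [Matrix.mem_orthogonalGroup_iff]
  have h1 := h fun _ => 1
  rw [Matrix.diagonal_one, Matrix.mul_one] at h1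
  rw [h1]
  exact Matrix.diagonal_one

/-- A sublinear function `H` of matrices that is invariant under orthogonal matrices on both sides
satisfies `n H(A) ≥ (∑ sᵢ) H(1)`, where the `sᵢ` are the singular values of `A`. The elementary
inequality `s ≥ r s² - (4/27) r³ s⁴` turns the sum into traces. -/
lemma invariant_lower_bound (hn : 1 ≤ n) (H : Matrix (Fin n) (Fin n) ℝ → ℝ)
    (hadd : ∀ A B, H (A + B) ≤ H A + H B) (hsmul : ∀ c : ℝ, 0 ≤ c → ∀ A, H (c • A) = c * H A)
    (h1 : 0 ≤ H 1)
    (hinv : ∀ P ∈ Matrix.orthogonalGroup (Fin n) ℝ, ∀ Q ∈ Matrix.orthogonalGroup (Fin n) ℝ,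
      ∀ A, H (P * A * Q) = H A) (A : Matrix (Fin n) (Fin n) ℝ) (r : ℝ) (hr : 0 < r) :
    (r * (A.transpose * A).trace - 4 / 27 * r ^ 3 *
      ((A.transpose * A) * (A.transpose * A)).trace) * H 1 ≤ n * H A := by
  obtain ⟨P, hP, Q, hQ, s, hs, rfl⟩ := exists_svd A
  have hPP := (Matrix.mem_orthogonalGroup_iff' _ _).1 hP
  have hQQ := (Matrix.mem_orthogonalGroup_iff _ _).1 hQ
  have hAA : (P * Matrix.diagonal s * Q).transpose * (P * Matrix.diagonal s * Q) =
      Q.transpose * Matrix.diagonal (fun i => s i ^ 2) * Q := by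
    rw [Matrix.transpose_mul, Matrix.transpose_mul, Matrix.diagonal_transpose]
    calc _ = Q.transpose * (Matrix.diagonal s * (P.transpose * P) * Matrix.diagonal s) * Q := by
          simp only [Matrix.mul_assoc]
      _ = _ := by rw [hPP, Matrix.mul_one, Matrix.diagonal_mul_diagonal]; simp only [sq]
  have htr : ∀ t : Fin n → ℝ, (Q.transpose * Matrix.diagonal t * Q).trace = ∑ i, t i := by
    intro t
    rw [Matrix.mul_assoc, Matrix.trace_mul_comm, Matrix.mul_assoc, hQQ, Matrix.mul_one,
      Matrix.trace_diagonal]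
  have hAA2 : Q.transpose * Matrix.diagonal (fun i => s i ^ 2) * Q *
      (Q.transpose * Matrix.diagonal (fun i => s i ^ 2) * Q) =
      Q.transpose * Matrix.diagonal (fun i => s i ^ 4) * Q := by
    calc _ = Q.transpose * (Matrix.diagonal (fun i => s i ^ 2) * (Q * Q.transpose) *
          Matrix.diagonal (fun i => s i ^ 2)) * Q := by simp only [Matrix.mul_assoc]
      _ = _ := by
        rw [hQQ, Matrix.mul_one, Matrix.diagonal_mul_diagonal]
        simp only [← pow_add]
  rw [hAA, hAA2, htr, htr, hinv P hP Q hQ]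
  have : NeZero n := ⟨by omega⟩
  -- average `diagonal s` over the cyclic shifts
  have hshift : (∑ i, s i) * H 1 ≤ n * H (Matrix.diagonal s) := by
    rw [← hsmul _ (Finset.sum_nonneg fun i _ => hs i)]
    have e : (∑ i, s i) • (1 : Matrix (Fin n) (Fin n) ℝ) =
        ∑ k : Fin n, Matrix.diagonal (s ∘ Equiv.addRight k) := by
      ext i j
      rw [Matrix.sum_apply]
      by_cases hij : i = j
      · subst hij
        simp only [Matrix.smul_apply, Matrix.one_apply_eq, smul_eq_mul, mul_one,
          Matrix.diagonal_apply_eq, Function.comp, Equiv.coe_addRight]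
        exact (Equiv.sum_comp (Equiv.addLeft i) s).symm
      · simp [hij]
    rw [e]
    have hsum : ∀ (S : Finset (Fin n)) (f : Fin n → Matrix (Fin n) (Fin n) ℝ),
        H (∑ k ∈ S, f k) ≤ ∑ k ∈ S, H (f k) := by
      intro S f
      refine Finset.le_sum_of_subadditive H ?_ hadd S f
      have := hsmul 0 le_rfl 0
      exact le_of_eq (by simpa using this)
    refine (hsum _ _).trans (le_of_eq ?_)
    have : ∀ k : Fin n, H (Matrix.diagonal (s ∘ Equiv.addRight k)) = H (Matrix.diagonal s) := by
      intro k
      obtain ⟨hσ, hc⟩ := permMatrix_conj (Equiv.addRight k) s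
      rw [← hc, hinv _ hσ _ (transpose_mem hσ)]
    rw [Finset.sum_congr rfl fun k _ => this k]
    simp
  refine le_trans ?_ hshift
  gcongr
  rw [Finset.mul_sum, Finset.mul_sum, ← Finset.sum_sub_distrib]
  refine Finset.sum_le_sum fun i _ => ?_
  -- with `u = r s`: `1 - u + (4/27) u³ = (1 - 2u/3)² (1 + u/3)`
  have hsi := hs i
  have : s i - (r * s i ^ 2 - 4 / 27 * r ^ 3 * s i ^ 4) =
      s i * ((1 - 2 * (r * s i) / 3) ^ 2 * (1 + (r * s i) / 3)) := by ring
  have h2 : 0 ≤ s i * ((1 - 2 * (r * s i) / 3) ^ 2 * (1 + (r * s i) / 3)) := by positivity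
  linarith

end SVD

/-! ### Matrices as vectors, and traces of Gaussian matrices -/

section Traces

variable {n : ℕ}

/-- A square matrix as a vector of the Euclidean space of dimension `n²`. -/
def toVec (A : Matrix (Fin n) (Fin n) ℝ) : EuclideanSpace ℝ (Fin n × Fin n) :=
  WithLp.toLp 2 fun p => A p.1 p.2

/-- The matrix with the entries of a given vector; inverse to `toVec`. -/
def toMat (g : EuclideanSpace ℝ (Fin n × Fin n)) : Matrix (Fin n) (Fin n) ℝ :=
  Matrix.of fun i j => g (i, j)

@[simp] lemma toVec_toMat (g : EuclideanSpace ℝ (Fin n × Fin n)) : toVec (toMat g) = g := rfl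

@[simp] lemma toMat_toVec (A : Matrix (Fin n) (Fin n) ℝ) : toMat (toVec A) = A := rfl

lemma toVec_add (A B : Matrix (Fin n) (Fin n) ℝ) : toVec (A + B) = toVec A + toVec B := rfl

lemma toVec_smul (c : ℝ) (A : Matrix (Fin n) (Fin n) ℝ) : toVec (c • A) = c • toVec A := rfl

lemma continuous_toVec : Continuous (toVec (n := n)) := by
  unfold toVec
  fun_prop

lemma continuous_toMat : Continuous (toMat (n := n)) := by
  unfold toMat
  fun_prop

lemma inner_toVec (A B : Matrix (Fin n) (Fin n) ℝ) :
    ⟪toVec A, toVec B⟫ = (A.transpose * B).trace := by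
  rw [EuclideanSpace.inner_eq_star_dotProduct, Matrix.trace]
  simp only [dotProduct, Fintype.sum_prod_type, Matrix.diag_apply, Matrix.mul_apply,
    Matrix.transpose_apply, toVec, star_trivial]
  rw [Finset.sum_comm]
  simp only [mul_comm]

/-- The two-sided multiplication `A ↦ P A Q`, as a linear map of vectors. -/
def conjVec (P Q : Matrix (Fin n) (Fin n) ℝ) :
    EuclideanSpace ℝ (Fin n × Fin n) →L[ℝ] EuclideanSpace ℝ (Fin n × Fin n) :=
  LinearMap.toContinuousLinearMap
    { toFun := fun g => toVec (P * toMat g * Q)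
      map_add' := fun g h => by
        rw [← toVec_add, ← Matrix.add_mul, ← Matrix.mul_add]
        rfl
      map_smul' := fun c g => by
        rw [RingHom.id_apply, ← toVec_smul, ← Matrix.smul_mul, ← Matrix.mul_smul]
        rfl }

lemma conjVec_apply (P Q : Matrix (Fin n) (Fin n) ℝ) (g) :
    conjVec P Q g = toVec (P * toMat g * Q) := rfl

lemma norm_toVec_conj {P Q : Matrix (Fin n) (Fin n) ℝ}
    (hP : P ∈ Matrix.orthogonalGroup (Fin n) ℝ) (hQ : Q ∈ Matrix.orthogonalGroup (Fin n) ℝ)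
    (A : Matrix (Fin n) (Fin n) ℝ) : ‖toVec (P * A * Q)‖ = ‖toVec A‖ := by
  have hPP : P.transpose * P = 1 := (Matrix.mem_orthogonalGroup_iff' _ _).1 hP
  have hQQ : Q * Q.transpose = 1 := (Matrix.mem_orthogonalGroup_iff _ _).1 hQ
  have h : ‖toVec (P * A * Q)‖ ^ 2 = ‖toVec A‖ ^ 2 := by
    rw [← real_inner_self_eq_norm_sq, ← real_inner_self_eq_norm_sq, inner_toVec, inner_toVec,
      Matrix.transpose_mul, Matrix.transpose_mul, Matrix.mul_assoc, Matrix.trace_mul_comm]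
    calc _ = (A.transpose * (P.transpose * P) * A * (Q * Q.transpose)).trace := by
          simp only [Matrix.mul_assoc]
      _ = _ := by rw [hPP, hQQ, Matrix.mul_one, Matrix.mul_one]
  exact (pow_left_inj₀ (norm_nonneg _) (norm_nonneg _) two_ne_zero).1 h

lemma stdG_map_conj {P Q : Matrix (Fin n) (Fin n) ℝ}
    (hP : P ∈ Matrix.orthogonalGroup (Fin n) ℝ) (hQ : Q ∈ Matrix.orthogonalGroup (Fin n) ℝ) :
    (stdG (EuclideanSpace ℝ (Fin n × Fin n))).map (conjVec P Q) = stdG _ := by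
  refine stdG_map (conjVec P Q) (conjVec P.transpose Q.transpose) (fun g h => ?_) fun h => ?_
  · rw [conjVec_apply, conjVec_apply, ← toVec_toMat g, ← toVec_toMat h, inner_toVec, inner_toVec]
    simp only [toMat_toVec]
    rw [Matrix.transpose_mul, Matrix.transpose_mul, Matrix.mul_assoc, Matrix.trace_mul_comm]
    simp only [Matrix.mul_assoc]
  · rw [conjVec_apply, norm_toVec_conj (transpose_mem hP) (transpose_mem hQ), toVec_toMat]

lemma trace_one_eq (g : EuclideanSpace ℝ (Fin n × Fin n)) :
    ((toMat g).transpose * toMat g).trace = ‖g‖ ^ 2 := by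
  rw [← inner_toVec, toVec_toMat, real_inner_self_eq_norm_sq]

lemma trace_two_eq (g : EuclideanSpace ℝ (Fin n × Fin n)) :
    (((toMat g).transpose * toMat g) * ((toMat g).transpose * toMat g)).trace =
      ∑ i, ∑ j, ∑ k, ∑ l, ⟪EuclideanSpace.single (k, i) (1 : ℝ), g⟫ *
        ⟪EuclideanSpace.single (k, j) (1 : ℝ), g⟫ * ⟪EuclideanSpace.single (l, j) (1 : ℝ), g⟫ *
        ⟪EuclideanSpace.single (l, i) (1 : ℝ), g⟫ := by
  rw [Matrix.trace]
  refine Finset.sum_congr rfl fun i _ => ?_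
  rw [Matrix.diag_apply, Matrix.mul_apply]
  refine Finset.sum_congr rfl fun j _ => ?_
  rw [Matrix.mul_apply, Matrix.mul_apply, Finset.sum_mul_sum]
  refine Finset.sum_congr rfl fun k _ => Finset.sum_congr rfl fun l _ => ?_
  simp [toMat, EuclideanSpace.inner_single_left, mul_assoc]

lemma integrable_trace_two :
    Integrable (fun g : EuclideanSpace ℝ (Fin n × Fin n) =>
      (((toMat g).transpose * toMat g) * ((toMat g).transpose * toMat g)).trace) (stdG _) := by
  simp_rw [trace_two_eq]
  exact integrable_finsetSum _ fun i _ => integrable_finsetSum _ fun j _ =>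
    integrable_finsetSum _ fun k _ => integrable_finsetSum _ fun l _ =>
      integrable_inner_four _ _ _ _

lemma integral_trace_two :
    ∫ g : EuclideanSpace ℝ (Fin n × Fin n),
      (((toMat g).transpose * toMat g) * ((toMat g).transpose * toMat g)).trace ∂(stdG _) =
      2 * (n : ℝ) ^ 3 + n ^ 2 := by
  simp_rw [trace_two_eq]
  rw [integral_finsetSum _ fun i _ => integrable_finsetSum _ fun j _ =>
    integrable_finsetSum _ fun k _ => integrable_finsetSum _ fun l _ =>
      integrable_inner_four _ _ _ _]
  have : ∀ i j : Fin n, ∫ g : EuclideanSpace ℝ (Fin n × Fin n), ∑ k, ∑ l,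
      ⟪EuclideanSpace.single (k, i) (1 : ℝ), g⟫ *
        ⟪EuclideanSpace.single (k, j) (1 : ℝ), g⟫ * ⟪EuclideanSpace.single (l, j) (1 : ℝ), g⟫ *
        ⟪EuclideanSpace.single (l, i) (1 : ℝ), g⟫ ∂(stdG _) =
      ∑ k : Fin n, ∑ l : Fin n, ((if i = j then (1 : ℝ) else 0) +
        (if k = l ∧ i = j then (1 : ℝ) else 0) + (if k = l then (1 : ℝ) else 0)) := by
    intro i j
    rw [integral_finsetSum _ fun k _ => integrable_finsetSum _ fun l _ =>
      integrable_inner_four _ _ _ _]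
    refine Finset.sum_congr rfl fun k _ => ?_
    rw [integral_finsetSum _ fun l _ => integrable_inner_four _ _ _ _]
    refine Finset.sum_congr rfl fun l _ => ?_
    rw [integral_inner_four]
    by_cases h1 : i = j <;> by_cases h2 : k = l <;>
      simp [EuclideanSpace.inner_single_left, h1, h2, eq_comm]
  have h2 : ∀ i : Fin n, ∫ g : EuclideanSpace ℝ (Fin n × Fin n), ∑ j, ∑ k, ∑ l,
      ⟪EuclideanSpace.single (k, i) (1 : ℝ), g⟫ *
        ⟪EuclideanSpace.single (k, j) (1 : ℝ), g⟫ * ⟪EuclideanSpace.single (l, j) (1 : ℝ), g⟫ *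
        ⟪EuclideanSpace.single (l, i) (1 : ℝ), g⟫ ∂(stdG _) =
      ∑ j : Fin n, ∑ k : Fin n, ∑ l : Fin n, ((if i = j then (1 : ℝ) else 0) +
        (if k = l ∧ i = j then (1 : ℝ) else 0) + (if k = l then (1 : ℝ) else 0)) := by
    intro i
    rw [integral_finsetSum _ fun j _ => integrable_finsetSum _ fun k _ =>
      integrable_finsetSum _ fun l _ => integrable_inner_four _ _ _ _]
    exact Finset.sum_congr rfl fun j _ => this i j
  rw [Finset.sum_congr rfl fun i _ => h2 i]
  simp only [Finset.sum_add_distrib, ite_and]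
  simp
  ring

end Traces

/-! ### Averaging over the orthogonal group -/

section Averaging

variable {n : ℕ}

/-- The mean of `F(Uᵀ A V)`, with `U` and `V` independent random matrices of law `μ`. -/
def avg (μ : Measure (Fin n → Fin n → ℝ)) (F : EuclideanSpace ℝ (Fin n × Fin n) → ℝ)
    (A : Matrix (Fin n) (Fin n) ℝ) : ℝ :=
  ∫ p : (Fin n → Fin n → ℝ) × (Fin n → Fin n → ℝ),
    F (toVec ((Matrix.of p.1).transpose * A * Matrix.of p.2)) ∂(μ.prod μ)

lemma continuous_of_mat : Continuous
    (fun U : Fin n → Fin n → ℝ => (Matrix.of U : Matrix (Fin n) (Fin n) ℝ)) := continuous_id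

lemma ae_orthogonal (μ : Measure (Fin n → Fin n → ℝ)) [IsProbabilityMeasure μ]
    (hO : μ {U | Matrix.of U ∈ Matrix.orthogonalGroup (Fin n) ℝ} = 1) :
    ∀ᵐ U ∂μ, Matrix.of U ∈ Matrix.orthogonalGroup (Fin n) ℝ := by
  have hm : MeasurableSet {U : Fin n → Fin n → ℝ |
      Matrix.of U ∈ Matrix.orthogonalGroup (Fin n) ℝ} := by
    simp_rw [Matrix.mem_orthogonalGroup_iff]
    refine (isClosed_eq ?_ continuous_const).measurableSet
    exact continuous_of_mat.matrix_mul continuous_of_mat.matrix_transpose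
  exact (mem_ae_iff_prob_eq_one hm).2 hO

variable {F : EuclideanSpace ℝ (Fin n × Fin n) → ℝ} {B : ℝ} {μ : Measure (Fin n → Fin n → ℝ)}

lemma continuous_avg_integrand (hF : Continuous F) :
    Continuous (fun z : EuclideanSpace ℝ (Fin n × Fin n) ×
      ((Fin n → Fin n → ℝ) × (Fin n → Fin n → ℝ)) =>
      F (toVec ((Matrix.of z.2.1).transpose * toMat z.1 * Matrix.of z.2.2))) := by
  refine hF.comp (continuous_toVec.comp ?_)
  exact ((continuous_of_mat.comp (by fun_prop)).matrix_transpose.matrix_mul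
    (continuous_toMat.comp continuous_fst)).matrix_mul (continuous_of_mat.comp (by fun_prop))

variable [IsProbabilityMeasure μ]

lemma ae_prod_orthogonal (hO : ∀ᵐ U ∂μ, Matrix.of U ∈ Matrix.orthogonalGroup (Fin n) ℝ) :
    ∀ᵐ p ∂(μ.prod μ), Matrix.of p.1 ∈ Matrix.orthogonalGroup (Fin n) ℝ ∧
      Matrix.of p.2 ∈ Matrix.orthogonalGroup (Fin n) ℝ :=
  (Measure.quasiMeasurePreserving_fst.ae hO).and (Measure.quasiMeasurePreserving_snd.ae hO)

lemma abs_conj_le (hF0 : ∀ g, 0 ≤ F g) (hB : ∀ g, F g ≤ B * ‖g‖)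
    {P Q : Matrix (Fin n) (Fin n) ℝ} (hP : P ∈ Matrix.orthogonalGroup (Fin n) ℝ)
    (hQ : Q ∈ Matrix.orthogonalGroup (Fin n) ℝ) (A : Matrix (Fin n) (Fin n) ℝ) :
    ‖F (toVec (P.transpose * A * Q))‖ ≤ B * ‖toVec A‖ := by
  rw [Real.norm_of_nonneg (hF0 _), ← norm_toVec_conj (transpose_mem hP) hQ A]
  exact hB _

lemma integrable_avg (hO : ∀ᵐ U ∂μ, Matrix.of U ∈ Matrix.orthogonalGroup (Fin n) ℝ)
    (hF0 : ∀ g, 0 ≤ F g) (hF : Continuous F) (hB : ∀ g, F g ≤ B * ‖g‖)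
    (A : Matrix (Fin n) (Fin n) ℝ) :
    Integrable (fun p : (Fin n → Fin n → ℝ) × (Fin n → Fin n → ℝ) =>
      F (toVec ((Matrix.of p.1).transpose * A * Matrix.of p.2))) (μ.prod μ) := by
  refine (integrable_const (B * ‖toVec A‖)).mono' ?_ ?_
  · have h : Continuous (fun p : (Fin n → Fin n → ℝ) × (Fin n → Fin n → ℝ) =>
        F (toVec ((Matrix.of p.1).transpose * A * Matrix.of p.2))) :=
      (continuous_avg_integrand hF).comp (f := fun p => (toVec A, p)) (by fun_prop)
    exact h.aestronglyMeasurable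
  · filter_upwards [ae_prod_orthogonal hO] with p hp
    exact abs_conj_le hF0 hB hp.1 hp.2 A

lemma avg_add (hO : ∀ᵐ U ∂μ, Matrix.of U ∈ Matrix.orthogonalGroup (Fin n) ℝ)
    (hF0 : ∀ g, 0 ≤ F g) (hF : Continuous F) (hB : ∀ g, F g ≤ B * ‖g‖)
    (hadd : ∀ g h, F (g + h) ≤ F g + F h) (A A' : Matrix (Fin n) (Fin n) ℝ) :
    avg μ F (A + A') ≤ avg μ F A + avg μ F A' := by
  unfold avg
  rw [← integral_add (integrable_avg hO hF0 hF hB A) (integrable_avg hO hF0 hF hB A')]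
  refine integral_mono (integrable_avg hO hF0 hF hB _)
    ((integrable_avg hO hF0 hF hB A).add (integrable_avg hO hF0 hF hB A')) fun p => ?_
  simp only [Matrix.mul_add, Matrix.add_mul, toVec_add]
  exact hadd _ _

lemma avg_smul (hsmul : ∀ c : ℝ, 0 ≤ c → ∀ g, F (c • g) = c * F g) (c : ℝ) (hc : 0 ≤ c)
    (A : Matrix (Fin n) (Fin n) ℝ) : avg μ F (c • A) = c * avg μ F A := by
  unfold avg
  simp only [Matrix.mul_smul, Matrix.smul_mul, toVec_smul, hsmul c hc, integral_const_mul]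

lemma measurePreserving_mul
    (hinv : ∀ V ∈ Matrix.orthogonalGroup (Fin n) ℝ,
      Measure.map (fun U => Matrix.of.symm (V * Matrix.of U)) μ = μ)
    {V : Matrix (Fin n) (Fin n) ℝ} (hV : V ∈ Matrix.orthogonalGroup (Fin n) ℝ) :
    MeasurePreserving (fun U => Matrix.of.symm (V * Matrix.of U)) μ μ := by
  refine ⟨?_, hinv V hV⟩
  have : Continuous (fun U : Fin n → Fin n → ℝ => Matrix.of.symm (V * Matrix.of U)) :=
    Continuous.matrix_mul (continuous_const (y := V)) continuous_of_mat
  exact this.measurable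

lemma integral_comp_mul
    (hinv : ∀ V ∈ Matrix.orthogonalGroup (Fin n) ℝ,
      Measure.map (fun U => Matrix.of.symm (V * Matrix.of U)) μ = μ)
    (hF : Continuous F)
    {V : Matrix (Fin n) (Fin n) ℝ} (hV : V ∈ Matrix.orthogonalGroup (Fin n) ℝ) :
    ∫ U, F (toVec (V * Matrix.of U)) ∂μ = ∫ U, F (toVec (Matrix.of U)) ∂μ := by
  have hm := measurePreserving_mul hinv hV
  have hc : Continuous (fun U : Fin n → Fin n → ℝ => F (toVec (Matrix.of U))) :=
    hF.comp (continuous_toVec.comp continuous_of_mat)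
  have := integral_map (μ := μ) hm.measurable.aemeasurable
    (f := fun U => F (toVec (Matrix.of U))) hc.aestronglyMeasurable
  rw [hm.map_eq] at this
  rw [this]
  rfl

/-- Left invariance of the law suffices for invariance on both sides, since `U` is transposed in
`F(Uᵀ A V)`. -/
lemma avg_invariant
    (hinv : ∀ V ∈ Matrix.orthogonalGroup (Fin n) ℝ,
      Measure.map (fun U => Matrix.of.symm (V * Matrix.of U)) μ = μ)
    (hF : Continuous F)
    (P : Matrix (Fin n) (Fin n) ℝ) (hP : P ∈ Matrix.orthogonalGroup (Fin n) ℝ)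
    (Q : Matrix (Fin n) (Fin n) ℝ) (hQ : Q ∈ Matrix.orthogonalGroup (Fin n) ℝ)
    (A : Matrix (Fin n) (Fin n) ℝ) : avg μ F (P * A * Q) = avg μ F A := by
  have hm := (measurePreserving_mul hinv (transpose_mem hP)).prod (measurePreserving_mul hinv hQ)
  have hc : Continuous (fun p : (Fin n → Fin n → ℝ) × (Fin n → Fin n → ℝ) =>
        F (toVec ((Matrix.of p.1).transpose * A * Matrix.of p.2))) :=
      (continuous_avg_integrand hF).comp (f := fun p => (toVec A, p)) (by fun_prop)
  have := integral_map (μ := μ.prod μ) hm.measurable.aemeasurable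
    (f := fun p => F (toVec ((Matrix.of p.1).transpose * A * Matrix.of p.2)))
    hc.aestronglyMeasurable
  rw [hm.map_eq] at this
  unfold avg
  rw [this]
  refine integral_congr_ae (Filter.Eventually.of_forall fun p => ?_)
  simp [Matrix.transpose_mul, Matrix.mul_assoc]

/-- `E F(Uᵀ V) = E F(V)`, by invariance under left translation for each fixed `U`. -/
lemma avg_one (hO : ∀ᵐ U ∂μ, Matrix.of U ∈ Matrix.orthogonalGroup (Fin n) ℝ)
    (hinv : ∀ V ∈ Matrix.orthogonalGroup (Fin n) ℝ,
      Measure.map (fun U => Matrix.of.symm (V * Matrix.of U)) μ = μ)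
    (hF0 : ∀ g, 0 ≤ F g) (hF : Continuous F) (hB : ∀ g, F g ≤ B * ‖g‖) :
    avg μ F 1 = ∫ U, F (toVec (Matrix.of U)) ∂μ := by
  unfold avg
  rw [integral_prod _ (integrable_avg hO hF0 hF hB 1)]
  have : ∀ᵐ U ∂μ, ∫ V, F (toVec ((Matrix.of U).transpose * 1 * Matrix.of V)) ∂μ =
      ∫ U, F (toVec (Matrix.of U)) ∂μ := by
    filter_upwards [hO] with U hU
    rw [Matrix.mul_one]
    exact integral_comp_mul hinv hF (transpose_mem hU)
  rw [integral_congr_ae this]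
  simp

lemma integrable_joint (hO : ∀ᵐ U ∂μ, Matrix.of U ∈ Matrix.orthogonalGroup (Fin n) ℝ)
    (hF0 : ∀ g, 0 ≤ F g) (hF : Continuous F) (hB : ∀ g, F g ≤ B * ‖g‖) :
    Integrable (fun z : EuclideanSpace ℝ (Fin n × Fin n) ×
      ((Fin n → Fin n → ℝ) × (Fin n → Fin n → ℝ)) =>
      F (toVec ((Matrix.of z.2.1).transpose * toMat z.1 * Matrix.of z.2.2)))
      ((stdG _).prod (μ.prod μ)) := by
  have h1 : Integrable (fun g : EuclideanSpace ℝ (Fin n × Fin n) => B * ‖g‖) (stdG _) := by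
    simpa using (integrable_norm_pow_stdG (E := EuclideanSpace ℝ (Fin n × Fin n)) 1).const_mul B
  refine (h1.comp_fst (μ.prod μ)).mono' (continuous_avg_integrand hF).aestronglyMeasurable ?_
  filter_upwards [Measure.quasiMeasurePreserving_snd.ae (ae_prod_orthogonal hO)] with z hz
  simpa using abs_conj_le hF0 hB hz.1 hz.2 (toMat z.1)

/-- Averaging does not change the Gaussian mean, because the Gaussian measure on matrices is
invariant under orthogonal matrices on both sides. -/
lemma integral_avg (hO : ∀ᵐ U ∂μ, Matrix.of U ∈ Matrix.orthogonalGroup (Fin n) ℝ)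
    (hF0 : ∀ g, 0 ≤ F g) (hF : Continuous F) (hB : ∀ g, F g ≤ B * ‖g‖) :
    Integrable (fun g => avg μ F (toMat g)) (stdG (EuclideanSpace ℝ (Fin n × Fin n))) ∧
    ∫ g, avg μ F (toMat g) ∂(stdG _) = ∫ g, F g ∂(stdG _) := by
  have hj := integrable_joint hO hF0 hF hB
  refine ⟨hj.integral_prod_left, ?_⟩
  unfold avg
  rw [integral_integral_swap hj]
  have : ∀ᵐ p ∂(μ.prod μ), ∫ g : EuclideanSpace ℝ (Fin n × Fin n),
      F (toVec ((Matrix.of p.1).transpose * toMat g * Matrix.of p.2)) ∂(stdG _) =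
      ∫ g, F g ∂(stdG _) := by
    filter_upwards [ae_prod_orthogonal hO] with p hp
    have := integral_map (μ := stdG (EuclideanSpace ℝ (Fin n × Fin n)))
      (φ := conjVec (Matrix.of p.1).transpose (Matrix.of p.2))
      (conjVec (Matrix.of p.1).transpose (Matrix.of p.2)).continuous.measurable.aemeasurable
      (f := F) hF.aestronglyMeasurable
    rw [stdG_map_conj (transpose_mem hp.1) hp.2] at this
    rw [this]
    rfl
  rw [integral_congr_ae this]
  simp

/-- Comparison of Gaussian and random orthogonal matrices: the mean of a nonnegative
continuous sublinear function over `O(n)` is at most `9 / (5 √n)` times its Gaussian mean. -/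
lemma orthogonal_le_gaussian (hn : 1 ≤ n)
    (hO : ∀ᵐ U ∂μ, Matrix.of U ∈ Matrix.orthogonalGroup (Fin n) ℝ)
    (hinv : ∀ V ∈ Matrix.orthogonalGroup (Fin n) ℝ,
      Measure.map (fun U => Matrix.of.symm (V * Matrix.of U)) μ = μ)
    (hF0 : ∀ g, 0 ≤ F g) (hF : Continuous F) (hB : ∀ g, F g ≤ B * ‖g‖)
    (hadd : ∀ g h, F (g + h) ≤ F g + F h) (hsmul : ∀ c : ℝ, 0 ≤ c → ∀ g, F (c • g) = c * F g) :
    5 / 9 * √n * ∫ U, F (toVec (Matrix.of U)) ∂μ ≤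
      ∫ g, F g ∂(stdG (EuclideanSpace ℝ (Fin n × Fin n))) := by
  have hn' : (1 : ℝ) ≤ n := by exact_mod_cast hn
  have hs : 0 < √(n : ℝ) := Real.sqrt_pos.2 (by linarith)
  have hss : √(n : ℝ) ^ 2 = n := Real.sq_sqrt (by linarith)
  obtain ⟨hi, he⟩ := integral_avg (μ := μ) hO hF0 hF hB
  rw [← he, ← avg_one hO hinv hF0 hF hB]
  have h1 : 0 ≤ avg μ F 1 := integral_nonneg fun _ => hF0 _
  set m := avg μ F 1
  set r := (√(n : ℝ))⁻¹ with hr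
  have hr0 : 0 < r := inv_pos.2 hs
  have hlow : ∀ g : EuclideanSpace ℝ (Fin n × Fin n),
      (r * ‖g‖ ^ 2 - 4 / 27 * r ^ 3 *
        (((toMat g).transpose * toMat g) * ((toMat g).transpose * toMat g)).trace) * m ≤
        n * avg μ F (toMat g) := fun g => by
    rw [← trace_one_eq]
    exact invariant_lower_bound hn (avg μ F) (avg_add hO hF0 hF hB hadd) (avg_smul hsmul) h1
      (avg_invariant hinv hF) (toMat g) r hr0
  have i1 := (integrable_norm_pow_stdG (E := EuclideanSpace ℝ (Fin n × Fin n)) 2).const_mul r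
  have i2 := (integrable_trace_two (n := n)).const_mul (4 / 27 * r ^ 3)
  have key := integral_mono ((i1.sub i2).mul_const m) (hi.const_mul (n : ℝ)) hlow
  simp only [Pi.sub_apply] at key
  rw [integral_mul_const, integral_const_mul, integral_sub i1 i2, integral_const_mul,
    integral_const_mul, integral_norm_sq, integral_trace_two] at key
  simp only [Fintype.card_prod, Fintype.card_fin, Nat.cast_mul] at key
  have hrn : r * n = √n := by rw [hr, inv_mul_eq_div, Real.div_sqrt]
  have hr2 : r ^ 2 * n = 1 := by rw [hr, inv_pow, hss, inv_mul_cancel₀ (by linarith)]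
  -- both traces, in terms of `√n`
  have e1 : r * ((n : ℝ) * n) = √n * n := by rw [← mul_assoc, hrn]
  have e2 : r ^ 3 * (2 * (n : ℝ) ^ 3 + n ^ 2) = √n * (2 * n + 1) := by
    calc r ^ 3 * (2 * (n : ℝ) ^ 3 + n ^ 2) = (r ^ 2 * n) * (r * n) * (2 * n + 1) := by ring
      _ = _ := by rw [hr2, hrn, one_mul]
  rw [e1, mul_assoc (4 / 27), e2] at key
  have h5 : 5 / 9 * √n * n * m ≤
      (√n * n - 4 / 27 * (√n * (2 * n + 1))) * m := by
    refine mul_le_mul_of_nonneg_right ?_ h1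
    -- `(4/27) (2n + 1) ≤ (4/9) n`, because `n ≥ 1`
    nlinarith
  have h6 := h5.trans key
  have hn0 : (0 : ℝ) < n := by linarith
  refine le_of_mul_le_mul_left ?_ hn0
  linarith

end Averaging

/-! ### Convex bodies and polars -/

section ConvexBodies

variable {n : ℕ}

lemma inner_tensorVec_toVec (x y : EuclideanSpace ℝ (Fin n)) (A : Matrix (Fin n) (Fin n) ℝ) :
    ⟪tensorVec x y, toVec A⟫ = ⟪y, Matrix.toEuclideanLin A x⟫ := by
  rw [EuclideanSpace.inner_eq_star_dotProduct, EuclideanSpace.inner_eq_star_dotProduct]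
  simp only [dotProduct, Fintype.sum_prod_type, toVec, tensorVec, star_trivial,
    Matrix.toLpLin_apply, Matrix.mulVec, Finset.sum_mul]
  exact Finset.sum_congr rfl fun i _ => Finset.sum_congr rfl fun j _ => by ring

lemma inner_le_gauge {S : Set (EuclideanSpace ℝ (Fin n))} (hS : S ∈ nhds 0)
    {y : EuclideanSpace ℝ (Fin n)} (hy : ∀ s ∈ S, ⟪y, s⟫ ≤ 1) (z : EuclideanSpace ℝ (Fin n)) :
    ⟪y, z⟫ ≤ gauge S z := by
  refine le_of_forall_gt fun r hr => ?_
  obtain ⟨b, hb, hbr, s, hs, rfl⟩ := exists_lt_of_gauge_lt (absorbent_nhds_zero hS) hr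
  simp only [real_inner_smul_right]
  nlinarith [hy s hs]

lemma integrable_gauge {S : Set (EuclideanSpace ℝ (Fin n))} (hc : Convex ℝ S) (hS : S ∈ nhds 0) :
    Integrable (gauge S) (stdG _) := by
  obtain ⟨δ, hδ, hb⟩ := Metric.mem_nhds_iff.1 hS
  refine integrable_stdG_of_le (continuous_gauge hc hS).aestronglyMeasurable 0 δ⁻¹ 1 fun x => ?_
  rw [abs_of_nonneg (gauge_nonneg _), zero_add, pow_one, ← div_eq_inv_mul, le_div_iff₀' hδ]
  exact mul_gauge_le_norm hb

lemma integral_gauge_le (hn : 1 ≤ n) (S : Set (EuclideanSpace ℝ (Fin n))) :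
    ∫ x, gauge S x ∂(stdG _) ≤ √n * Mparam n S := by
  have : Nonempty (Fin n) := ⟨⟨0, hn⟩⟩
  rw [integral_homogeneous (gauge S) fun c hc x => by
    rw [gauge_smul_of_nonneg hc.le, smul_eq_mul], mul_comm]
  exact mul_le_mul_of_nonneg_right (integral_norm_le n hn)
    (integral_nonneg fun x => gauge_nonneg _)

lemma norm_le_Rparam {K : Set (EuclideanSpace ℝ (Fin n))} (hK : Bornology.IsBounded K)
    {x : EuclideanSpace ℝ (Fin n)} (hx : x ∈ K) : ‖x‖ ≤ Rparam K := by
  obtain ⟨C, hC⟩ := hK.exists_norm_le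
  exact le_csSup ⟨C, by rintro _ ⟨y, hy, rfl⟩; exact hC y hy⟩ ⟨x, hx, rfl⟩

lemma zero_mem_polarBody (K : Set (EuclideanSpace ℝ (Fin n))) : 0 ∈ polarBody K := fun y _ => by
  rw [inner_zero_left]
  exact zero_le_one

lemma convex_polarBody (K : Set (EuclideanSpace ℝ (Fin n))) : Convex ℝ (polarBody K) := by
  intro x hx y hy a b ha hb hab z hz
  rw [inner_add_left, real_inner_smul_left, real_inner_smul_left]
  nlinarith [hx z hz, hy z hz]

lemma isBounded_polarBody {K : Set (EuclideanSpace ℝ (Fin n))} (hK : K ∈ nhds 0) :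
    Bornology.IsBounded (polarBody K) := by
  obtain ⟨δ, hδ, hb⟩ := Metric.nhds_basis_closedBall.mem_iff.1 hK
  refine isBounded_iff_forall_norm_le.2 ⟨δ⁻¹, fun y hy => ?_⟩
  by_cases h0 : y = 0
  · rw [h0, norm_zero]
    positivity
  have hy0 : 0 < ‖y‖ := norm_pos_iff.2 h0
  have h1 := hy ((δ / ‖y‖) • y) (hb (by
    rw [mem_closedBall_zero_iff, norm_smul, Real.norm_of_nonneg (by positivity)]
    exact le_of_eq (by field_simp)))
  rw [real_inner_smul_right, real_inner_self_eq_norm_sq] at h1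
  rw [← one_div, le_div_iff₀ hδ]
  calc ‖y‖ * δ = δ / ‖y‖ * ‖y‖ ^ 2 := by field_simp
    _ ≤ 1 := h1

lemma polarBody_mem_nhds {K : Set (EuclideanSpace ℝ (Fin n))} (hK : Bornology.IsBounded K) :
    polarBody K ∈ nhds 0 := by
  obtain ⟨C, hC0, hC⟩ := hK.exists_pos_norm_le
  refine Filter.mem_of_superset (Metric.closedBall_mem_nhds 0 (inv_pos.2 hC0)) fun x hx y hy => ?_
  rw [mem_closedBall_zero_iff] at hx
  calc ⟪x, y⟫ ≤ ‖x‖ * ‖y‖ := real_inner_le_norm _ _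
    _ ≤ C⁻¹ * C := by gcongr; exact hC y hy
    _ = 1 := inv_mul_cancel₀ (ne_of_gt hC0)

/-- The bipolar theorem, in the form `‖z‖_T ≤ sup_{y ∈ T°} ⟨y, z⟩`. -/
lemma gauge_le_of_polar {T : Set (EuclideanSpace ℝ (Fin n))} (hc : Convex ℝ T) (hcl : IsClosed T)
    (h0 : 0 ∈ T) {z : EuclideanSpace ℝ (Fin n)} {c : ℝ} (hc0 : 0 ≤ c)
    (h : ∀ y ∈ polarBody T, ⟪y, z⟫ ≤ c) : gauge T z ≤ c := by
  refine le_of_forall_pos_le_add fun ε hε => ?_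
  have hd : 0 < c + ε := by linarith
  refine gauge_le_of_mem hd.le ?_
  rw [Set.mem_smul_set_iff_inv_smul_mem₀ hd.ne']
  by_contra hz
  obtain ⟨f, u, hfu, huz⟩ := geometric_hahn_banach_closed_point hc hcl hz
  have hu : 0 < u := by simpa using hfu 0 h0
  let w := (InnerProductSpace.toDual ℝ (EuclideanSpace ℝ (Fin n))).symm f
  have hw : ∀ a, ⟪w, a⟫ = f a := fun a => InnerProductSpace.toDual_symm_apply
  have hwT : u⁻¹ • w ∈ polarBody T := fun a ha => by
    rw [real_inner_smul_left, hw, ← div_eq_inv_mul, div_le_one hu]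
    exact (hfu a ha).le
  have h1 := h _ hwT
  rw [real_inner_smul_left, hw, ← div_eq_inv_mul, div_le_iff₀ hu] at h1
  rw [map_smul, smul_eq_mul, ← div_eq_inv_mul, lt_div_iff₀ hd] at huz
  nlinarith

lemma mapNorm_nonneg (K T : Set (EuclideanSpace ℝ (Fin n))) (A : Matrix (Fin n) (Fin n) ℝ) :
    0 ≤ mapNorm K T A :=
  Real.sSup_nonneg (by
    rintro _ ⟨x, _, rfl⟩
    exact div_nonneg (gauge_nonneg _) (gauge_nonneg _))

/-- Duality: a bound for `⟨A x, y⟩` over `x ∈ K` and `y ∈ T°` bounds `‖A : K → T‖`. -/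
lemma mapNorm_le {K T : Set (EuclideanSpace ℝ (Fin n))} (hKc : IsCompact K) (hKv : Convex ℝ K)
    (hK0 : K ∈ nhds 0) (hTc : IsClosed T) (hTv : Convex ℝ T) (hT0 : 0 ∈ T)
    (A : Matrix (Fin n) (Fin n) ℝ) {f : ℝ} (hf : 0 ≤ f)
    (h : ∀ x ∈ K, ∀ y ∈ polarBody T, ⟪y, Matrix.toEuclideanLin A x⟫ ≤ f) :
    mapNorm K T A ≤ f := by
  refine Real.sSup_le ?_ hf
  rintro _ ⟨x, hx, rfl⟩
  have hk : 0 < gauge K x := (gauge_pos (absorbent_nhds_zero hK0)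
    (NormedSpace.isVonNBounded_iff ℝ |>.2 hKc.isBounded)).2 hx
  have hmem : (gauge K x)⁻¹ • x ∈ K := by
    refine hKc.isClosed.closure_subset ((gauge_le_one_iff_mem_closure hKv hK0).1 ?_)
    rw [gauge_smul_of_nonneg (inv_nonneg.2 hk.le), smul_eq_mul, inv_mul_cancel₀ hk.ne']
  have := gauge_le_of_polar hTv hTc hT0 hf (h _ hmem)
  rwa [map_smul, gauge_smul_of_nonneg (inv_nonneg.2 hk.le), smul_eq_mul, ← div_eq_inv_mul] at this

end ConvexBodies

/-- **Benyamini–Gordon**: `E ‖U : K → T‖ ≤ C (R(K) M(T) + R(T°) M(K°))` for a random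
orthogonal matrix `U` distributed according to the Haar probability measure on `O(n)`
(formalized as any probability measure concentrated on `O(n)` that is invariant under
left translation by orthogonal matrices). -/
theorem benyamini_gordon :
    ∃ C : ℝ, 0 < C ∧
      ∀ n : ℕ, 1 ≤ n → ∀ K T : Set (EuclideanSpace ℝ (Fin n)),
        IsConvexBody K → IsConvexBody T → 0 ∈ interior K → 0 ∈ interior T →
        ∀ μ : Measure (Fin n → Fin n → ℝ), IsProbabilityMeasure μ →
          μ {U | Matrix.of U ∈ Matrix.orthogonalGroup (Fin n) ℝ} = 1 →
          (∀ V ∈ Matrix.orthogonalGroup (Fin n) ℝ,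
            Measure.map (fun U => Matrix.of.symm (V * Matrix.of U)) μ = μ) →
          ∫ U, mapNorm K T (Matrix.of U) ∂μ ≤
            C * (Rparam K * Mparam n T + Rparam (polarBody T) * Mparam n (polarBody K)) := by
  refine ⟨9 / 5 * √2, by positivity, ?_⟩
  intro n hn K T hK hT hK0 hT0 μ hμ hO' hinv
  have hO := ae_orthogonal μ hO'
  have hKn : K ∈ nhds 0 := mem_interior_iff_mem_nhds.1 hK0
  have hTn : T ∈ nhds 0 := mem_interior_iff_mem_nhds.1 hT0
  have hKb := hK.1.isBounded
  have hLb := isBounded_polarBody hTn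
  -- a sequence in `K × T°` that starts at the origin and is dense
  let S := K ×ˢ polarBody T
  have : Nonempty S := ⟨⟨(0, 0), mem_of_mem_nhds hKn, zero_mem_polarBody T⟩⟩
  let d : ℕ → S := TopologicalSpace.denseSeq S
  have hd : DenseRange d := TopologicalSpace.denseRange_denseSeq S
  let x : ℕ → EuclideanSpace ℝ (Fin n) := fun k => Nat.casesOn k 0 fun j => (d j).1.1
  let y : ℕ → EuclideanSpace ℝ (Fin n) := fun k => Nat.casesOn k 0 fun j => (d j).1.2
  have hxK : ∀ k, x k ∈ K := by
    rintro (_ | k)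
    · exact mem_of_mem_nhds hKn
    · exact (d k).2.1
  have hyT : ∀ k, y k ∈ polarBody T := by
    rintro (_ | k)
    · exact zero_mem_polarBody T
    · exact (d k).2.2
  have hx : ∀ k, ‖x k‖ ≤ Rparam K := fun k => norm_le_Rparam hKb (hxK k)
  have hy : ∀ k, ‖y k‖ ≤ Rparam (polarBody T) := fun k => norm_le_Rparam hLb (hyT k)
  have hF0 := supF_nonneg hx hy rfl
  have hFc := continuous_supF hx hy
  have hFB := supF_le hx hy
  have hmap : ∀ U : Fin n → Fin n → ℝ,
      mapNorm K T (Matrix.of U) ≤ supF x y (toVec (Matrix.of U)) := by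
    intro U
    refine mapNorm_le hK.1 hK.2.1 hKn hT.1.isClosed hT.2.1 (mem_of_mem_nhds hTn) _ (hF0 _)
      fun a ha b hb => ?_
    have hden : ∀ s : S, ⟪s.1.2, Matrix.toEuclideanLin (Matrix.of U) s.1.1⟫ ≤
        supF x y (toVec (Matrix.of U)) := fun s => by
      refine hd.induction_on s (isClosed_le ?_ continuous_const) fun k => ?_
      · have : Continuous (Matrix.toEuclideanLin (Matrix.of U)) :=
          LinearMap.continuous_of_finiteDimensional _
        fun_prop
      · rw [← inner_tensorVec_toVec]
        exact le_supF hx hy _ (k + 1)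
    exact hden ⟨(a, b), ha, hb⟩
  have hFi : Integrable (fun U => supF x y (toVec (Matrix.of U))) μ := by
    refine (integrable_const (Rparam K * Rparam (polarBody T) *
      ‖toVec (1 : Matrix (Fin n) (Fin n) ℝ)‖)).mono'
      (hFc.comp (continuous_toVec.comp continuous_of_mat)).aestronglyMeasurable ?_
    filter_upwards [hO] with U hU
    have := abs_conj_le hF0 hFB (one_mem (Matrix.orthogonalGroup (Fin n) ℝ)) hU 1
    rwa [Matrix.mul_one, Matrix.transpose_one, Matrix.one_mul] at this
  have h1 : ∫ U, mapNorm K T (Matrix.of U) ∂μ ≤ ∫ U, supF x y (toVec (Matrix.of U)) ∂μ :=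
    integral_mono_of_nonneg (Filter.Eventually.of_forall fun U => mapNorm_nonneg _ _ _) hFi
      (Filter.Eventually.of_forall hmap)
  have h2 := orthogonal_le_gaussian hn hO hinv hF0 hFc hFB (supF_add hx hy) supF_smul
  have hKp := polarBody_mem_nhds hKb
  have h3 := chevet hx hy (gauge T) (gauge (polarBody K)) (integrable_gauge hT.2.1 hTn)
    (integrable_gauge (convex_polarBody K) hKp) (fun k z => inner_le_gauge hTn (hyT k) z)
    (fun k z => inner_le_gauge hKp (fun s hs => by
      rw [real_inner_comm]
      exact hs _ (hxK k)) z)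
  have hR : 0 ≤ Rparam K := (norm_nonneg _).trans (hx 0)
  have hL : 0 ≤ Rparam (polarBody T) := (norm_nonneg _).trans (hy 0)
  have h4 : √2 * (Rparam K * ∫ z, gauge T z ∂(stdG _) +
      Rparam (polarBody T) * ∫ z, gauge (polarBody K) z ∂(stdG _)) ≤
      √2 * (Rparam K * (√n * Mparam n T) +
        Rparam (polarBody T) * (√n * Mparam n (polarBody K))) := by
    gcongr <;> exact integral_gauge_le hn _
  have hs : 0 < √(n : ℝ) := Real.sqrt_pos.2 (by exact_mod_cast hn)
  refine h1.trans (le_of_mul_le_mul_left ?_ (show 0 < 5 / 9 * √(n : ℝ) by positivity))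
  refine (h2.trans (h3.trans h4)).trans (le_of_eq ?_)
  ring

end
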